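/- Let H₀, …, H_{n−1} be real Hilbert spaces, H_n := H₀, and for i = 1, …, n let G_i : H₀ → H_i be bounded linear with G_n = id, A_i : H_i → Set H_i maximal monotone, B_i : H_i → H_i monotone and ℓ_i-Lipschitz, C_i : H_i → H_i β_i-cocoercive with β_i > 0, D_i : H_i → H_i monotone and continuously Fréchet differentiable with m_i-Lipschitz derivative, and T_i := A_i + B_i + C_i + D_i. Let I_D ⊂ {1, …, n} with m_i > 0 for i ∈ I_D and D_i = 0 for i ∉ I_D. Assume the extended-solution set S := {(z, w₁, …, w_{n−1}) : w_i ∈ T_i(G_i z), i = 1, …, n, with w_n := −Σ_{i<n} G_i* w_i} is nonempty. Fix parameters 0 < τ̲ < τ̄ < 2, 0 < θ̲ < θ̄ < 2, ρ̂ > 0, δ̂ > 0, γ > 0, and for i ∉ I_D bounds 0 < ρ̲_i ≤ ρ̄_i < 1/(1/(4β_i) + ℓ_i). Let sequences (z^k) in H₀, (w_i^k), (x_i^k), (y_i^k) in H_i, and (ρ_i^k) in (0,∞) satisfy, for every k and every i = 1, …, n, one of: (I) w_i^k ∈ T_i(G_i z^k), ρ_i^k = ρ̂, x_i^k = G_i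 z^k, y_i^k = w_i^k; (II) i ∈ I_D, G_i z^k + ρ_i^k w_i^k − ρ_i^k(B_i + C_i)(G_i z^k) − x_i^k ∈ ρ_i^k(A_i(x_i^k) + D_{i(G_i z^k)}(x_i^k)), y_i^k = (G_i z^k − x_i^k)/ρ_i^k + w_i^k + [B_i(x_i^k) − B_i(G_i z^k)] + [D_i(x_i^k) − D_{i(G_i z^k)}(x_i^k)], and θ̲ ≤ 4ℓ_i²(ρ_i^k)² + (β_i^{-1} + δ̂)ρ_i^k + (m_i ρ_i^k ‖x_i^k − G_i z^k‖)² ≤ θ̄; or (III) i ∉ I_D, ρ̲_i ≤ ρ_i^k ≤ ρ̄_i, G_i z^k + ρ_i^k w_i^k − ρ_i^k(B_i + C_i)(G_i z^k) − x_i^k ∈ ρ_i^k A_i(x_i^k), y_i^k = (G_i z^k − x_i^k)/ρ_i^k + w_i^k + [B_i(x_i^k) − B_i(G_i z^k)]. With y_n^k, x_n^k from i = n, let u_i^k := x_i^k − G_i x_n^k (i < n), v^k := Σ_{i<n} G_i* y_i^k + y_n^k, φ_k := ⟪z^k, v^k⟫ + Σ_{i<n} ⟪w_i^k, u_i^k⟫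 − Σ_{i=1}^n [⟪x_i^k, y_i^k⟫ + (1/(4β_i))‖x_i^k − G_i z^k‖²], π_k := γ^{-1}‖v^k‖² + Σ_{i<n}‖u_i^k‖², and suppose: if φ_k > 0 then z^{k+1} = z^k − γ^{-1}α_k v^k and w_i^{k+1} = w_i^k − α_k u_i^k (i < n) with α_k = τ_k φ_k/π_k for some τ_k ∈ [τ̲, τ̄]; otherwise z^{k+1} = z^k and w_i^{k+1} = w_i^k. Then (z^k, w₁^k, …, w_{n−1}^k) converges weakly to some (z̄, w̄₁, …, w̄_{n−1}) ∈ S, i.e. z^k ⇀ z̄, w_i^k ⇀ w̄_i for i < n, and w̄_i ∈ T_i(G_i z̄) for i = 1, …, n with w̄_n := −Σ_{i<n} G_i* w̄_i; moreover x_i^k ⇀ G_i z̄ and y_i^k ⇀ w̄_i for i = 1, …, n. -/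

import Mathlib

open scoped RealInnerProductSpace

open Filter

/-!
Put `L z = (G₁ z, …, Gₙ₋₁ z, z)` and `M w = (w₁, …, wₙ₋₁, -∑ Gᵢ* wᵢ)`. The ranges of `L` and `M` are
orthogonal, and the extended solutions are the pairs with `M w ∈ T (L z)`, where `T` is the product
of the operators `Tᵢ`, again maximal monotone. In the product space the algorithm is a single
step of `T` at `(L z, M w)` followed by a projection; the weight `γ` disappears on rescaling `z`.

By orthogonality `⟪L z - x, y - M w⟫` is affine in `(z, w)`. Each branch produces `(x, y)` for which
this function, lowered by the cocoercivity defect, is nonpositive at extended solutions and takes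
at the current point a value `φ ≥ 0` which bounds the squared distances of `(x, y)` to `(L z, M w)`
and of `M w` to `T x` by a multiple of `φ (1 + φ)`. The relaxed projections are Fejér monotone, and
since the half-space normals are `O(φ (1 + φ))` in square, the decrease of the distances forces
`φ → 0`. Hence there are points `y'` of `T x` with `x - L z → 0` and `y' - M w → 0`. As
`⟪L z, M w⟫ = 0`, the pairing `⟪x, y'⟫` tends to `0`, the value of the pairing at a weak cluster
point, so monotonicity passes to the limit: weak cluster points are extended solutions, and Opial's
lemma applies.
-/

theorem tendsto_zero_of_norm_sq_le {ι E : Type*} [SeminormedAddCommGroup E] {l : Filter ι}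
    {x : ι → E} {b : ι → ℝ} (hx : ∀ k, ‖x k‖ ^ 2 ≤ b k) (hb : Tendsto b l (nhds 0)) :
    Tendsto x l (nhds 0) := by
  have hsqrt : Tendsto (fun k => √(b k)) l (nhds 0) := by simpa using hb.sqrt
  exact squeeze_zero_norm (fun k => Real.le_sqrt_of_sq_le (hx k)) hsqrt

theorem norm_le_of_antitone_norm_sub {E : Type*} [SeminormedAddCommGroup E] {p : ℕ → E} {a : E}
    (h : Antitone fun k => ‖p k - a‖) (k : ℕ) : ‖p k‖ ≤ ‖a‖ + ‖p 0 - a‖ :=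
  (norm_le_norm_add_norm_sub' (p k) a).trans (by gcongr; exact h k.zero_le)

section WeakConvergence

variable {ι E F : Type*} [NormedAddCommGroup E] [InnerProductSpace ℝ E]
  [NormedAddCommGroup F] [InnerProductSpace ℝ F]

/-- Weak convergence of the family `x` to `a` along the filter `l`, tested against the inner
products with fixed vectors (equivalent to all continuous functionals when `E` is complete). -/
def WeakTendsto (x : ι → E) (l : Filter ι) (a : E) : Prop :=
  ∀ h : E, Tendsto (fun k => ⟪h, x k⟫) l (nhds ⟪h, a⟫)

theorem exists_weakTendsto_of_bounded [CompleteSpace E] (U : Ultrafilter ι) {x : ι → E} {R : ℝ}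
    (hx : ∀ k, ‖x k‖ ≤ R) : ∃ a, WeakTendsto x U a := by
  let f : ι → WeakDual ℝ E := fun k => StrongDual.toWeakDual (InnerProductSpace.toDual ℝ E (x k))
  have hf : ∀ k, f k ∈ WeakDual.toStrongDual ⁻¹' Metric.closedBall (0 : StrongDual ℝ E) R :=
    fun k => by simpa [f] using hx k
  obtain ⟨g, -, hg⟩ := (WeakDual.isCompact_closedBall (0 : StrongDual ℝ E) R).ultrafilter_le_nhds
    (U.map f) (le_principal_iff.2 (Eventually.of_forall (f := (U : Filter ι)) hf))
  refine ⟨(InnerProductSpace.toDual ℝ E).symm (WeakDual.toStrongDual g), fun h => ?_⟩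
  rw [real_inner_comm, InnerProductSpace.toDual_symm_apply]
  have heval : Tendsto (fun k => f k h) U (nhds (g h)) :=
    ((WeakDual.eval_continuous h).tendsto g).comp hg
  exact heval.congr fun k => real_inner_comm _ _

theorem WeakTendsto.clm_apply [CompleteSpace E] [CompleteSpace F] {l : Filter ι} {x : ι → E}
    {a : E} (hx : WeakTendsto x l a) (T : E →L[ℝ] F) : WeakTendsto (fun k => T (x k)) l (T a) :=
  fun h => by
    simpa only [ContinuousLinearMap.adjoint_inner_left] using
      hx (ContinuousLinearMap.adjoint T h)

theorem WeakTendsto.of_tendsto_sub {l : Filter ι} {x y : ι → E} {a : E}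
    (hx : WeakTendsto x l a) (hyx : Tendsto (fun k => y k - x k) l (nhds 0)) :
    WeakTendsto y l a := fun h => by
  simpa [← inner_add_right] using (hx h).add ((tendsto_const_nhds (x := h)).inner hyx)

theorem tendsto_inner_of_tendsto_sub {l : Filter ι} {p q x y : ι → E} {R R' c : ℝ}
    (hp : ∀ k, ‖p k‖ ≤ R) (hq : ∀ k, ‖q k‖ ≤ R')
    (hx : Tendsto (fun k => x k - p k) l (nhds 0)) (hy : Tendsto (fun k => y k - q k) l (nhds 0))
    (hpq : Tendsto (fun k => ⟪p k, q k⟫) l (nhds c)) :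
    Tendsto (fun k => ⟪x k, y k⟫) l (nhds c) := by
  have hbdd : ∀ {v : ι → E} {r : ℝ}, (∀ k, ‖v k‖ ≤ r) →
      IsBoundedUnder (· ≤ ·) l (norm ∘ v) := fun hv => isBoundedUnder_of ⟨_, hv⟩
  have hxq := hx.op_zero_isBoundedUnder_le (hbdd hq) (fun u v => ⟪u, v⟫) norm_inner_le_norm
  have hyp := hy.op_zero_isBoundedUnder_le (hbdd hp) (fun u v => ⟪u, v⟫) norm_inner_le_norm
  have hsum := ((hpq.add hxq).add hyp).add (hx.inner hy)
  rw [inner_zero_left, add_zero, add_zero, add_zero] at hsum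
  refine hsum.congr fun k => ?_
  simp only [inner_sub_left, inner_sub_right, real_inner_comm (p k)]
  ring

theorem norm_sub_sq_sub_norm_sub_sq (p a b : E) :
    ‖p - a‖ ^ 2 - ‖p - b‖ ^ 2 = 2 * ⟪b - a, p⟫ + (‖a‖ ^ 2 - ‖b‖ ^ 2) := by
  rw [norm_sub_sq_real, norm_sub_sq_real, inner_sub_left, real_inner_comm a, real_inner_comm b]
  ring

/-- Opial's lemma. -/
theorem exists_weakTendsto_of_fejer [CompleteSpace E] {S : Set E} (hS : S.Nonempty) {p : ℕ → E}
    (hfejer : ∀ s ∈ S, Antitone fun k => ‖p k - s‖)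
    (hcluster : ∀ U : Ultrafilter ℕ, (U : Filter ℕ) ≤ atTop → ∀ a, WeakTendsto p U a → a ∈ S) :
    ∃ a ∈ S, WeakTendsto p atTop a := by
  obtain ⟨s, hs⟩ := hS
  have hbdd := norm_le_of_antitone_norm_sub (hfejer s hs)
  have hconv : ∀ a ∈ S, ∃ d, Tendsto (fun k => ‖p k - a‖) atTop (nhds d) := fun a ha =>
    ⟨_, tendsto_atTop_ciInf (hfejer a ha) ⟨0, by rintro _ ⟨k, rfl⟩; exact norm_nonneg _⟩⟩
  have hunique : ∀ a ∈ S, ∀ b ∈ S, ∀ U V : Ultrafilter ℕ, (U : Filter ℕ) ≤ atTop →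
      (V : Filter ℕ) ≤ atTop → WeakTendsto p U a → WeakTendsto p V b → b = a := by
    intro a ha b hb U V hU hV hUa hVb
    obtain ⟨da, hda⟩ := hconv a ha
    obtain ⟨db, hdb⟩ := hconv b hb
    have hinner : Tendsto (fun k => ⟪b - a, p k⟫) atTop
        (nhds ((da ^ 2 - db ^ 2 - (‖a‖ ^ 2 - ‖b‖ ^ 2)) / 2)) := by
      refine ((((hda.pow 2).sub (hdb.pow 2)).sub_const _).div_const 2).congr fun k => ?_
      rw [norm_sub_sq_sub_norm_sub_sq]
      ring
    have hab : ⟪b - a, b⟫ = ⟪b - a, a⟫ :=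
      (tendsto_nhds_unique (hVb _) (hinner.mono_left hV)).trans
        (tendsto_nhds_unique (hinner.mono_left hU) (hUa _))
    rw [← sub_eq_zero, ← inner_self_eq_zero (𝕜 := ℝ), inner_sub_right, hab, sub_self]
  obtain ⟨a, ha⟩ := exists_weakTendsto_of_bounded (hyperfilter ℕ) hbdd
  have haS : a ∈ S := hcluster _ Nat.hyperfilter_le_atTop a ha
  refine ⟨a, haS, fun h => tendsto_iff_ultrafilter _ _ _ |>.2 fun V hV => ?_⟩
  obtain ⟨b, hb⟩ := exists_weakTendsto_of_bounded V hbdd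
  obtain rfl := hunique a haS b (hcluster V hV b hb) _ V Nat.hyperfilter_le_atTop hV ha hb
  exact hb h

end WeakConvergence

section SeparatingProjections

variable {E : Type*} [NormedAddCommGroup E] [InnerProductSpace ℝ E]

/-- The iterates `p` of relaxed projections, with relaxation parameters in `[τlo, τhi]`, onto the
half-spaces `{a | φ k ≤ ⟪p k - a, s k⟫}` containing the target set `S`; `φ k` is the value at the
current iterate of the affine function separating it from `S`, and `s k` is its gradient. -/
structure IsSeparatingProjectionSequence (S : Set E) (τlo τhi : ℝ) (p s : ℕ → E) (φ : ℕ → ℝ) :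
    Prop where
  nonneg : ∀ k, 0 ≤ φ k
  separates : ∀ a ∈ S, ∀ k, φ k ≤ ⟪p k - a, s k⟫
  step : ∀ k, ∃ τ ∈ Set.Icc τlo τhi, p (k + 1) = p k - (τ * φ k / ‖s k‖ ^ 2) • s k

theorem tendsto_zero_of_mul_sq_le {ι : Type*} {l : Filter ι} {φ ε : ι → ℝ} {c : ℝ} (hc : 0 < c)
    (hφ : ∀ k, 0 ≤ φ k) (hε : Tendsto ε l (nhds 0))
    (hle : ∀ᶠ k in l, c * φ k ^ 2 ≤ ε k * (φ k * (1 + φ k))) : Tendsto φ l (nhds 0) := by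
  have hbound : Tendsto (fun k => 2 / c * |ε k|) l (nhds 0) := by
    simpa only [abs_zero, mul_zero] using hε.abs.const_mul (2 / c)
  refine squeeze_zero' (Eventually.of_forall hφ) ?_ hbound
  filter_upwards [hle, hε.eventually (gt_mem_nhds (half_pos hc))] with k hk hεk
  rcases (hφ k).eq_or_lt with h0 | hpos
  · rw [← h0]
    positivity
  · have hlin : c * φ k ≤ ε k * (1 + φ k) := by
      refine le_of_mul_le_mul_right ?_ hpos
      linarith
    rw [div_mul_eq_mul_div, le_div_iff₀ hc]
    nlinarith [le_abs_self (ε k)]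

theorem norm_sub_smul_sub_sq_add_le {p s a : E} {τ φ : ℝ} (hτ : 0 ≤ τ) (hφ0 : 0 ≤ φ)
    (hφ : φ ≤ ⟪p - a, s⟫) :
    ‖p - (τ * φ / ‖s‖ ^ 2) • s - a‖ ^ 2 + τ * (2 - τ) * (φ ^ 2 / ‖s‖ ^ 2) ≤ ‖p - a‖ ^ 2 := by
  have hexpand : ‖p - (τ * φ / ‖s‖ ^ 2) • s - a‖ ^ 2 =
      ‖p - a‖ ^ 2 - 2 * (τ * φ / ‖s‖ ^ 2 * ⟪p - a, s⟫) + τ ^ 2 * (φ ^ 2 / ‖s‖ ^ 2) := by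
    rw [sub_right_comm, norm_sub_sq_real, inner_smul_right, norm_smul, mul_pow, Real.norm_eq_abs,
      sq_abs]
    field_simp
  have hprogress : τ * φ / ‖s‖ ^ 2 * φ ≤ τ * φ / ‖s‖ ^ 2 * ⟪p - a, s⟫ := by gcongr
  rw [hexpand]
  linarith [show τ * φ / ‖s‖ ^ 2 * φ = τ * (φ ^ 2 / ‖s‖ ^ 2) by ring]

namespace IsSeparatingProjectionSequence

variable {S : Set E} {τlo τhi : ℝ} {p s : ℕ → E} {φ : ℕ → ℝ}

theorem norm_sub_sq_add_le (h : IsSeparatingProjectionSequence S τlo τhi p s φ) (hτlo : 0 ≤ τlo)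
    (hτhi : τhi ≤ 2) {a : E} (ha : a ∈ S) (k : ℕ) :
    ‖p (k + 1) - a‖ ^ 2 + τlo * (2 - τhi) * (φ k ^ 2 / ‖s k‖ ^ 2) ≤ ‖p k - a‖ ^ 2 := by
  obtain ⟨τ, ⟨hlo, hhi⟩, hstep⟩ := h.step k
  have hτ : τlo * (2 - τhi) ≤ τ * (2 - τ) :=
    mul_le_mul hlo (by linarith) (by linarith) (by linarith)
  rw [hstep]
  have hrelaxed := norm_sub_smul_sub_sq_add_le (hτlo.trans hlo) (h.nonneg k) (h.separates a ha k)
  refine le_trans ?_ hrelaxed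
  gcongr

theorem antitone_norm_sub (h : IsSeparatingProjectionSequence S τlo τhi p s φ) (hτlo : 0 ≤ τlo)
    (hτhi : τhi ≤ 2) {a : E} (ha : a ∈ S) : Antitone fun k => ‖p k - a‖ :=
  antitone_nat_of_succ_le fun k => by
    have hdecrease : 0 ≤ τlo * (2 - τhi) * (φ k ^ 2 / ‖s k‖ ^ 2) := by
      have := sub_nonneg.2 hτhi
      positivity
    refine le_of_sq_le_sq ?_ (norm_nonneg _)
    linarith [h.norm_sub_sq_add_le hτlo hτhi ha k]

theorem mul_sq_le (h : IsSeparatingProjectionSequence S τlo τhi p s φ) (hτlo : 0 ≤ τlo)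
    (hτhi : τhi ≤ 2) {a : E} (ha : a ∈ S) (k : ℕ) :
    τlo * (2 - τhi) * φ k ^ 2 ≤ (‖p k - a‖ ^ 2 - ‖p (k + 1) - a‖ ^ 2) * ‖s k‖ ^ 2 := by
  rcases eq_or_ne (s k) 0 with hs | hs
  · have hφ : φ k = 0 := le_antisymm (by simpa [hs] using h.separates a ha k) (h.nonneg k)
    simp [hφ, hs]
  · have hpos : 0 < ‖s k‖ ^ 2 := by positivity
    rw [← div_le_iff₀ hpos, mul_div_assoc]
    linarith [h.norm_sub_sq_add_le hτlo hτhi ha k]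

theorem tendsto_zero (h : IsSeparatingProjectionSequence S τlo τhi p s φ) (hτlo : 0 < τlo)
    (hτhi : τhi < 2) (hS : S.Nonempty) {K : ℝ}
    (hs : ∀ k, ‖s k‖ ^ 2 ≤ K * (φ k * (1 + φ k))) : Tendsto φ atTop (nhds 0) := by
  obtain ⟨a, ha⟩ := hS
  have hanti := h.antitone_norm_sub hτlo.le hτhi.le ha
  have hdecrease : ∀ k, 0 ≤ ‖p k - a‖ ^ 2 - ‖p (k + 1) - a‖ ^ 2 := fun k =>
    sub_nonneg.2 (pow_le_pow_left₀ (norm_nonneg _) (hanti k.le_succ) 2)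
  have hlim : Tendsto (fun k => ‖p k - a‖ ^ 2 - ‖p (k + 1) - a‖ ^ 2) atTop (nhds 0) := by
    have hconv := (tendsto_atTop_ciInf hanti
      ⟨0, by rintro _ ⟨k, rfl⟩; exact norm_nonneg _⟩).pow 2
    rw [← sub_self]
    exact hconv.sub (hconv.comp (tendsto_add_atTop_nat 1))
  refine tendsto_zero_of_mul_sq_le (mul_pos hτlo (sub_pos.2 hτhi)) h.nonneg
    (by simpa only [zero_mul] using hlim.mul_const K) (Eventually.of_forall fun k => ?_)
  calc _ ≤ (‖p k - a‖ ^ 2 - ‖p (k + 1) - a‖ ^ 2) * ‖s k‖ ^ 2 := h.mul_sq_le hτlo.le hτhi.le ha k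
    _ ≤ _ := by rw [mul_assoc]; exact mul_le_mul_of_nonneg_left (hs k) (hdecrease k)

end IsSeparatingProjectionSequence

end SeparatingProjections

section Minty

variable {E : Type*} [NormedAddCommGroup E] [InnerProductSpace ℝ E]

theorem nonneg_of_forall_add_mul_nonneg {a b : ℝ}
    (h : ∀ r, 0 < r → r ≤ 1 → 0 ≤ a + r * b) : 0 ≤ a := by
  have hlim : Tendsto (fun r : ℝ => a + r * b) (nhdsWithin 0 (Set.Ioi 0)) (nhds (a + 0 * b)) :=
    (Continuous.tendsto (by fun_prop) 0).mono_left nhdsWithin_le_nhds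
  rw [zero_mul, add_zero] at hlim
  refine ge_of_tendsto hlim ?_
  filter_upwards [Ioc_mem_nhdsGT (zero_lt_one' ℝ)] with r hr using h r hr.1 hr.2

theorem norm_add_smul_sub_sq (p q : E) (r : ℝ) :
    ‖p + r • (q - p)‖ ^ 2 = ‖p‖ ^ 2 + 2 * r * ⟪p, q - p⟫ + r ^ 2 * ‖q - p‖ ^ 2 := by
  rw [norm_add_sq_real, inner_smul_right, norm_smul, mul_pow, Real.norm_eq_abs, sq_abs]
  ring

theorem exists_isMinOn_add_half_norm_sq [CompleteSpace E] {F : Set (E × ℝ)} (hF : IsClosed F)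
    (hconv : Convex ℝ F) (hne : F.Nonempty)
    (hbdd : BddBelow ((fun q : E × ℝ => q.2 + ‖q.1‖ ^ 2 / 2) '' F)) :
    ∃ q ∈ F, IsMinOn (fun q : E × ℝ => q.2 + ‖q.1‖ ^ 2 / 2) F q := by
  set J : E × ℝ → ℝ := fun q => q.2 + ‖q.1‖ ^ 2 / 2 with hJ
  set m := sInf (J '' F)
  have hle : ∀ q ∈ F, m ≤ J q := fun q hq => csInf_le hbdd ⟨q, hq, rfl⟩
  obtain ⟨v, -, hv, hvF⟩ := exists_seq_tendsto_sInf (hne.image J) hbdd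
  choose q hqF hqv using hvF
  obtain rfl : (fun k => J (q k)) = v := funext hqv
  have hparallelogram : ∀ j k,
      ‖(q j).1 - (q k).1‖ ^ 2 ≤ 4 * ((J (q j) - m) + (J (q k) - m)) := fun j k => by
    have hmid := hle _ (hconv (hqF k) (hqF j) (by norm_num : (0 : ℝ) ≤ 1 / 2)
      (by norm_num : (0 : ℝ) ≤ 1 / 2) (by norm_num))
    have hpar := parallelogram_law_with_norm ℝ (q k).1 (q j).1
    simp only [hJ, Prod.fst_add, Prod.snd_add, Prod.smul_fst, Prod.smul_snd, ← smul_add,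
      norm_smul, smul_eq_mul] at hmid ⊢
    rw [norm_sub_rev]
    norm_num at hmid
    nlinarith
  have hcauchy : CauchySeq fun k => (q k).1 := by
    have hgap : Tendsto (fun k => J (q k) - m) atTop (nhds 0) := by
      rw [← sub_self m]
      exact hv.sub_const m
    have hgaps := ((hgap.comp tendsto_fst).add (hgap.comp tendsto_snd)).const_mul 4
    rw [prod_atTop_atTop_eq, add_zero, mul_zero] at hgaps
    rw [cauchySeq_iff_tendsto_dist_atTop_0]
    simpa only [dist_eq_norm, norm_zero] using
      (tendsto_zero_of_norm_sq_le (fun n : ℕ × ℕ => hparallelogram n.1 n.2) hgaps).norm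
  obtain ⟨p, hp⟩ := cauchySeq_tendsto_of_complete hcauchy
  have ht : Tendsto (fun k => (q k).2) atTop (nhds (m - ‖p‖ ^ 2 / 2)) :=
    (hv.sub ((hp.norm.pow 2).div_const 2)).congr fun k => add_sub_cancel_right _ _
  refine ⟨(p, m - ‖p‖ ^ 2 / 2), hF.mem_of_tendsto (hp.prodMk_nhds ht) (Eventually.of_forall hqF),
    fun r hr => ?_⟩
  simpa [hJ] using hle r hr

theorem add_norm_sq_le_of_isMinOn {F : Set (E × ℝ)} (hconv : Convex ℝ F) {q r : E × ℝ}
    (hq : q ∈ F) (hmin : IsMinOn (fun q : E × ℝ => q.2 + ‖q.1‖ ^ 2 / 2) F q) (hr : r ∈ F) :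
    q.2 + ‖q.1‖ ^ 2 ≤ r.2 + ⟪q.1, r.1⟫ := by
  have hslope : 0 ≤ r.2 - q.2 + ⟪q.1, r.1 - q.1⟫ := by
    refine nonneg_of_forall_add_mul_nonneg (b := ‖r.1 - q.1‖ ^ 2 / 2) fun s hs hs1 => ?_
    have hle := hmin (hconv.add_smul_sub_mem hq hr ⟨hs.le, hs1⟩)
    simp only [Set.mem_ofPred_eq, Prod.fst_add, Prod.snd_add, Prod.smul_fst, Prod.smul_snd,
      Prod.fst_sub, Prod.snd_sub, norm_add_smul_sub_sq, smul_eq_mul] at hle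
    refine nonneg_of_mul_nonneg_right (a := s) ?_ hs
    linarith
  rw [inner_sub_right, real_inner_self_eq_norm_sq] at hslope
  linarith

end Minty

section MaximalMonotone

variable {E : Type*} [NormedAddCommGroup E] [InnerProductSpace ℝ E]

/-- Maximal monotonicity of a set-valued operator, given as a function into sets: it is monotone,
and its graph contains every point monotonically related to all of its points. -/
structure IsMaximalMonotone (A : E → Set E) : Prop where
  inner_nonneg : ∀ x y u v, u ∈ A x → v ∈ A y → 0 ≤ ⟪x - y, u - v⟫
  mem_of_forall_inner_nonneg : ∀ p q, (∀ r s, s ∈ A r → 0 ≤ ⟪p - r, q - s⟫) → q ∈ A p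

/-- The epigraph of the Fitzpatrick function
`(x, u) ↦ ⨆ (a, b) ∈ gra A, ⟪x, b⟫ + ⟪a, u⟫ - ⟪a, b⟫` of `A`, the Hilbert product carrying `(x, u)`.
For maximal monotone `A` that function dominates the pairing `⟪x, u⟫` and agrees with it exactly on
the graph. -/
def fitzpatrickEpigraph (A : E → Set E) : Set (WithLp 2 (E × E) × ℝ) :=
  {q | ∀ a, ∀ b ∈ A a, ⟪q.1.fst, b⟫ + ⟪a, q.1.snd⟫ - ⟪a, b⟫ ≤ q.2}

theorem isClosed_fitzpatrickEpigraph (A : E → Set E) : IsClosed (fitzpatrickEpigraph A) := by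
  simp only [fitzpatrickEpigraph, Set.ofPred_forall]
  refine isClosed_iInter fun a => isClosed_iInter fun b => isClosed_iInter fun _ =>
    isClosed_le ?_ continuous_snd
  have hfst : Continuous fun q : WithLp 2 (E × E) × ℝ => q.1.fst :=
    (WithLp.fstL 2 ℝ E E).continuous.comp continuous_fst
  have hsnd : Continuous fun q : WithLp 2 (E × E) × ℝ => q.1.snd :=
    (WithLp.sndL 2 ℝ E E).continuous.comp continuous_fst
  exact ((hfst.inner continuous_const).add (continuous_const.inner hsnd)).sub continuous_const

theorem convex_fitzpatrickEpigraph (A : E → Set E) : Convex ℝ (fitzpatrickEpigraph A) := by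
  intro q hq r hr s t hs ht hst a b hb
  have hle := add_le_add (mul_le_mul_of_nonneg_left (hq a b hb) hs)
    (mul_le_mul_of_nonneg_left (hr a b hb) ht)
  simp only [Prod.fst_add, Prod.snd_add, Prod.smul_fst, Prod.smul_snd, WithLp.add_fst,
    WithLp.add_snd, WithLp.smul_fst, WithLp.smul_snd, inner_add_left, inner_add_right,
    real_inner_smul_left, real_inner_smul_right, smul_eq_mul]
  linear_combination hle + ⟪a, b⟫ * hst

/-- Calmness at every point `p`, uniformly on each ball centred there: local Lipschitz
continuity with one of the two points pinned at `p`. -/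
def IsCalmOnBalls (F : E → E) : Prop :=
  ∀ p R, ∃ L, ∀ x, ‖x - p‖ ≤ R → ‖F x - F p‖ ≤ L * ‖x - p‖

namespace IsMaximalMonotone

variable {A : E → Set E}

theorem exists_mem (hA : IsMaximalMonotone A) : ∃ a, ∃ b, b ∈ A a := by
  by_contra! hempty
  exact hempty 0 0 (hA.mem_of_forall_inner_nonneg 0 0 fun r s hs => absurd hs (hempty r s))

theorem mem_fitzpatrickEpigraph (hA : IsMaximalMonotone A) {x u : E} (hu : u ∈ A x) :
    (WithLp.toLp 2 (x, u), ⟪x, u⟫) ∈ fitzpatrickEpigraph A := fun a b hb => by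
  have hmono := hA.inner_nonneg x a u b hu hb
  simp only [inner_sub_left, inner_sub_right] at hmono
  change ⟪x, b⟫ + ⟪a, u⟫ - ⟪a, b⟫ ≤ ⟪x, u⟫
  linarith

theorem inner_le_of_mem_fitzpatrickEpigraph (hA : IsMaximalMonotone A)
    {q : WithLp 2 (E × E) × ℝ} (hq : q ∈ fitzpatrickEpigraph A) : ⟪q.1.fst, q.1.snd⟫ ≤ q.2 := by
  by_contra! hlt
  have hmem : q.1.snd ∈ A q.1.fst := hA.mem_of_forall_inner_nonneg _ _ fun a b hb => by
    have := hq a b hb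
    simp only [inner_sub_left, inner_sub_right]
    linarith
  have := hq _ _ hmem
  linarith

/-- Minty's theorem at the origin. The operator `-1`, shifted to the minimizer of the Fitzpatrick
function plus `‖·‖² / 2`, lies below the graph of `A`, so both graphs meet. -/
theorem exists_neg_mem [CompleteSpace E] (hA : IsMaximalMonotone A) : ∃ x, -x ∈ A x := by
  have hne : (fitzpatrickEpigraph A).Nonempty :=
    let ⟨_, _, hb⟩ := hA.exists_mem
    ⟨_, hA.mem_fitzpatrickEpigraph hb⟩
  have hbdd : BddBelow ((fun q : WithLp 2 (E × E) × ℝ => q.2 + ‖q.1‖ ^ 2 / 2) ''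
      fitzpatrickEpigraph A) := by
    refine ⟨0, ?_⟩
    rintro _ ⟨q, hq, rfl⟩
    have hle := hA.inner_le_of_mem_fitzpatrickEpigraph hq
    have hsq := norm_add_sq_real q.1.fst q.1.snd
    simp only [WithLp.prod_norm_sq_eq_of_L2]
    linarith [sq_nonneg ‖q.1.fst + q.1.snd‖]
  obtain ⟨q, hq, hmin⟩ := exists_isMinOn_add_half_norm_sq (isClosed_fitzpatrickEpigraph A)
    (convex_fitzpatrickEpigraph A) hne hbdd
  set x := q.1.fst
  set u := q.1.snd
  have hxu : ⟪x, u⟫ ≤ q.2 := hA.inner_le_of_mem_fitzpatrickEpigraph hq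
  have hgraph : ∀ a, ∀ b ∈ A a, ‖x + u‖ ^ 2 ≤ ⟪-u - a, -x - b⟫ := fun a b hb => by
    have hle := add_norm_sq_le_of_isMinOn (convex_fitzpatrickEpigraph A) hq hmin
      (hA.mem_fitzpatrickEpigraph hb)
    simp only [WithLp.prod_norm_sq_eq_of_L2, WithLp.prod_inner_apply] at hle
    change q.2 + (‖x‖ ^ 2 + ‖u‖ ^ 2) ≤ ⟪a, b⟫ + (⟪x, a⟫ + ⟪u, b⟫) at hle
    simp only [norm_add_sq_real, inner_sub_left, inner_sub_right, inner_neg_left,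
      inner_neg_right]
    rw [real_inner_comm x u, real_inner_comm x a]
    linarith
  have hmem : -x ∈ A (-u) := hA.mem_of_forall_inner_nonneg _ _ fun a b hb =>
    (sq_nonneg _).trans (hgraph a b hb)
  have hzero : x + u = 0 := by simpa using hgraph _ _ hmem
  exact ⟨x, by rwa [neg_eq_of_add_eq_zero_left hzero] at hmem⟩

theorem comp_add_smul (hA : IsMaximalMonotone A) (c : E) (q : E) {μ : ℝ} (hμ : 0 < μ) :
    IsMaximalMonotone fun x => {u | q + μ • u ∈ A (c + x)} where
  inner_nonneg x y u v hu hv := by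
    have hmono := hA.inner_nonneg _ _ _ _ hu hv
    rw [add_sub_add_left_eq_sub, add_sub_add_left_eq_sub, ← smul_sub, real_inner_smul_right]
      at hmono
    exact nonneg_of_mul_nonneg_right hmono hμ
  mem_of_forall_inner_nonneg x u h := hA.mem_of_forall_inner_nonneg _ _ fun r s hs => by
    have hmem : q + μ • (μ⁻¹ • (s - q)) ∈ A (c + (r - c)) := by
      rwa [smul_inv_smul₀ hμ.ne', add_sub_cancel, add_sub_cancel]
    have hx : c + x - r = x - (r - c) := by abel
    have hu : q + μ • u - s = μ • (u - μ⁻¹ • (s - q)) := by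
      rw [smul_sub, smul_inv_smul₀ hμ.ne']
      abel
    rw [hx, hu, real_inner_smul_right]
    exact mul_nonneg hμ.le (h _ _ hmem)

theorem exists_add_smul_sub_mem [CompleteSpace E] (hA : IsMaximalMonotone A) (p q : E) {μ : ℝ}
    (hμ : 0 < μ) : ∃ a, q + μ • (p - a) ∈ A a := by
  obtain ⟨x, hx⟩ := (hA.comp_add_smul p q hμ).exists_neg_mem
  exact ⟨p + x, by simpa using hx⟩

theorem norm_sub_le_of_add_smul_sub_mem (hA : IsMaximalMonotone A) {p q a c d : E} {μ : ℝ}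
    (hμ : 1 ≤ μ) (ha : q + μ • (p - a) ∈ A a) (hd : d ∈ A c) :
    ‖a - c‖ ≤ ‖p - c‖ + ‖q - d‖ := by
  have hmono := hA.inner_nonneg _ _ _ _ ha hd
  rw [show q + μ • (p - a) - d = (q - d) + μ • ((p - c) - (a - c)) by module, inner_add_right,
    real_inner_smul_right, inner_sub_right (a - c) (p - c), real_inner_self_eq_norm_sq] at hmono
  have hqd := real_inner_le_norm (a - c) (q - d)
  have hpc := real_inner_le_norm (a - c) (p - c)
  by_contra! hlt
  have hac : 0 < ‖a - c‖ := lt_of_le_of_lt (by positivity) hlt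
  have hstrict : ‖q - d‖ < μ * (‖a - c‖ - ‖p - c‖) := by
    nlinarith [norm_nonneg (q - d)]
  nlinarith

/-- The resolvent point `a` of `A` at `p` with a large parameter `μ` stays in a fixed ball around
`p`; there the calmness modulus of `F` falls below `μ`, which forces `a = p`. -/
theorem add_of_isCalmOnBalls [CompleteSpace E] (hA : IsMaximalMonotone A) {F : E → E}
    (hF : ∀ x y, 0 ≤ ⟪x - y, F x - F y⟫) (hcalm : IsCalmOnBalls F) :
    IsMaximalMonotone fun x => {y | y - F x ∈ A x} where
  inner_nonneg x y u v hu hv := by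
    have hadd := add_nonneg (hA.inner_nonneg _ _ _ _ hu hv) (hF x y)
    rwa [← inner_add_right, show u - F x - (v - F y) + (F x - F y) = u - v by abel] at hadd
  mem_of_forall_inner_nonneg p q h := by
    obtain ⟨c, d, hd⟩ := hA.exists_mem
    obtain ⟨L, hL⟩ := hcalm p (‖p - c‖ + ‖q - F p - d‖ + ‖p - c‖)
    obtain ⟨a, ha⟩ := hA.exists_add_smul_sub_mem p (q - F p) (μ := |L| + 1) (by positivity)
    have hap : ‖a - p‖ ≤ ‖p - c‖ + ‖q - F p - d‖ + ‖p - c‖ := by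
      have hac := hA.norm_sub_le_of_add_smul_sub_mem (by simp) ha hd
      have htri := norm_sub_le_norm_sub_add_norm_sub a c p
      rw [norm_sub_rev c p] at htri
      linarith
    have hrel := h a (q - F p + (|L| + 1) • (p - a) + F a) (by simpa using ha)
    rw [show q - (q - F p + (|L| + 1) • (p - a) + F a) = (F p - F a) - (|L| + 1) • (p - a) by
      abel, inner_sub_right, real_inner_smul_right, real_inner_self_eq_norm_sq] at hrel
    have hinner := (real_inner_le_norm (p - a) (F p - F a)).trans
      (mul_le_mul_of_nonneg_left ((norm_sub_rev _ _).trans_le (hL a hap)) (norm_nonneg _))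
    rw [norm_sub_rev a p] at hinner
    have hsq : ‖p - a‖ ^ 2 ≤ 0 := by
      nlinarith [le_abs_self L, sq_nonneg ‖p - a‖]
    obtain rfl : p = a := by simpa [sub_eq_zero] using (sq_nonneg ‖p - a‖).antisymm' hsq
    simpa using ha

end IsMaximalMonotone

end MaximalMonotone

section MaximalMonotoneProducts

variable {κ : Type*} {E : κ → Type*} [∀ i, NormedAddCommGroup (E i)]
  [∀ i, InnerProductSpace ℝ (E i)] [∀ i, CompleteSpace (E i)]
  {H K : Type*} [NormedAddCommGroup H] [InnerProductSpace ℝ H] [CompleteSpace H]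
  [NormedAddCommGroup K] [InnerProductSpace ℝ K] [CompleteSpace K]

theorem IsMaximalMonotone.exists_inner_nonpos {A : H → Set H} (hA : IsMaximalMonotone A)
    (p q : H) : ∃ a, ∃ b ∈ A a, ⟪p - a, q - b⟫ ≤ 0 ∧ (0 ≤ ⟪p - a, q - b⟫ → q ∈ A p) := by
  obtain ⟨a, ha⟩ := hA.exists_add_smul_sub_mem p q one_pos
  rw [one_smul] at ha
  refine ⟨a, _, ha, ?_, fun h => ?_⟩ <;>
    rw [sub_add_cancel_left, inner_neg_right, real_inner_self_eq_norm_sq] at *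
  · exact neg_nonpos.2 (sq_nonneg _)
  · obtain rfl : p = a := by simpa [sub_eq_zero] using (sq_nonneg ‖p - a‖).antisymm' (by linarith)
    simpa using ha

theorem IsMaximalMonotone.piLp [Fintype κ] {A : ∀ i, E i → Set (E i)}
    (hA : ∀ i, IsMaximalMonotone (A i)) :
    IsMaximalMonotone fun x : PiLp 2 E => {y : PiLp 2 E | ∀ i, y i ∈ A i (x i)} where
  inner_nonneg x y u v hu hv := by
    rw [PiLp.inner_apply]
    exact Finset.sum_nonneg fun i _ => (hA i).inner_nonneg _ _ _ _ (hu i) (hv i)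
  mem_of_forall_inner_nonneg p q h i := by
    choose a b hb hnonpos hmem using fun i => (hA i).exists_inner_nonpos (p i) (q i)
    have hsum := h (WithLp.toLp 2 a) (WithLp.toLp 2 b) hb
    rw [PiLp.inner_apply] at hsum
    have hzero := (Finset.sum_eq_zero_iff_of_nonpos fun i _ => hnonpos i).1
      (le_antisymm (Finset.sum_nonpos fun i _ => hnonpos i) hsum)
    exact hmem i (hzero i (Finset.mem_univ i)).ge

theorem IsMaximalMonotone.prodLp {A : H → Set H} {B : K → Set K} (hA : IsMaximalMonotone A)
    (hB : IsMaximalMonotone B) :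
    IsMaximalMonotone fun x : WithLp 2 (H × K) =>
      {y : WithLp 2 (H × K) | y.fst ∈ A x.fst ∧ y.snd ∈ B x.snd} where
  inner_nonneg x y u v hu hv := by
    rw [WithLp.prod_inner_apply]
    exact add_nonneg (hA.inner_nonneg _ _ _ _ hu.1 hv.1) (hB.inner_nonneg _ _ _ _ hu.2 hv.2)
  mem_of_forall_inner_nonneg p q h := by
    obtain ⟨a, b, hb, hab, hmemA⟩ := hA.exists_inner_nonpos p.fst q.fst
    obtain ⟨c, d, hd, hcd, hmemB⟩ := hB.exists_inner_nonpos p.snd q.snd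
    have hsum : 0 ≤ ⟪p.fst - a, q.fst - b⟫ + ⟪p.snd - c, q.snd - d⟫ :=
      h (WithLp.toLp 2 (a, c)) (WithLp.toLp 2 (b, d)) ⟨hb, hd⟩
    exact ⟨hmemA (by linarith), hmemB (by linarith)⟩

end MaximalMonotoneProducts

section Demiclosedness

variable {ι H : Type*} [NormedAddCommGroup H] [InnerProductSpace ℝ H]

/-- The graph of a maximal monotone operator is not weakly sequentially closed in general; it is
closed under weak limits along which the pairing passes to the limit. -/
theorem IsMaximalMonotone.mem_of_weakTendsto {T : H → Set H} (hT : IsMaximalMonotone T)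
    {l : Filter ι} [l.NeBot] {x y : ι → H} {a b : H} (hmem : ∀ k, y k ∈ T (x k))
    (hx : WeakTendsto x l a) (hy : WeakTendsto y l b)
    (hxy : Tendsto (fun k => ⟪x k, y k⟫) l (nhds ⟪a, b⟫)) : b ∈ T a := by
  refine hT.mem_of_forall_inner_nonneg a b fun r s hs => ?_
  have hlim : Tendsto (fun k => ⟪x k, y k⟫ - ⟪s, x k⟫ - (⟪r, y k⟫ - ⟪r, s⟫)) l
      (nhds (⟪a, b⟫ - ⟪s, a⟫ - (⟪r, b⟫ - ⟪r, s⟫))) :=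
    (hxy.sub (hx s)).sub ((hy r).sub_const _)
  rw [inner_sub_left, inner_sub_right, inner_sub_right, real_inner_comm s a]
  refine ge_of_tendsto' hlim fun k => ?_
  refine (hT.inner_nonneg _ _ _ _ (hmem k) hs).trans_eq ?_
  simp only [inner_sub_left, inner_sub_right, real_inner_comm s]
  ring

end Demiclosedness

section AbstractProjectiveSplitting

open scoped InnerProduct

variable {H E 𝓗 : Type*} [NormedAddCommGroup H] [InnerProductSpace ℝ H] [CompleteSpace H]
  [NormedAddCommGroup E] [InnerProductSpace ℝ E] [CompleteSpace E]
  [NormedAddCommGroup 𝓗] [InnerProductSpace ℝ 𝓗] [CompleteSpace 𝓗]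

/-- The outcome `(x, y)` of processing the operator `T` at the pair `(p, w)`. The bilinear
function `⟪p - x, y - w⟫`, lowered by `f ≥ 0`, still dominates its analogue at every point of the
graph of `T`, and `f` controls the distance of `(x, y)` to `(p, w)` and of `w` to `T x`. -/
structure IsSeparatingStep (T : 𝓗 → Set 𝓗) (K : ℝ) (p w x y : 𝓗) (f : ℝ) : Prop where
  nonneg : 0 ≤ f
  separates : ∀ a, ∀ b ∈ T a, f + ⟪a - x, y - b⟫ ≤ ⟪p - x, y - w⟫
  exists_residual_le : ∃ y' ∈ T x,
    ‖x - p‖ ^ 2 + ‖y - w‖ ^ 2 + ‖y' - w‖ ^ 2 ≤ K * (f * (1 + f))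

/-- Projective splitting for the inclusion `M w ∈ T (L z)`, where `L` and `M` have orthogonal
ranges: `T` is processed at `(L z, M w)`, and `(z, w)` is then projected, with relaxation, onto the
resulting half-space, whose normal is `(L† Y, M† X)`. -/
structure IsProjectiveSplitting (T : 𝓗 → Set 𝓗) (L : H →L[ℝ] 𝓗) (M : E →L[ℝ] 𝓗)
    (K τlo τhi : ℝ) (z : ℕ → H) (w : ℕ → E) (X Y : ℕ → 𝓗) (φ : ℕ → ℝ) : Prop where
  orthogonal : ∀ z w, ⟪L z, M w⟫ = 0
  isSeparatingStep : ∀ k, IsSeparatingStep T K (L (z k)) (M (w k)) (X k) (Y k) (φ k)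
  update : ∀ k, ∃ τ ∈ Set.Icc τlo τhi,
    z (k + 1) = z k - (τ * φ k / (‖(L†) (Y k)‖ ^ 2 + ‖(M†) (X k)‖ ^ 2)) • (L†) (Y k) ∧
    w (k + 1) = w k - (τ * φ k / (‖(L†) (Y k)‖ ^ 2 + ‖(M†) (X k)‖ ^ 2)) • (M†) (X k)

namespace IsProjectiveSplitting

variable {T : 𝓗 → Set 𝓗} {L : H →L[ℝ] 𝓗} {M : E →L[ℝ] 𝓗} {K τlo τhi : ℝ} {z : ℕ → H}
  {w : ℕ → E} {X Y : ℕ → 𝓗} {φ : ℕ → ℝ}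

theorem adjoint_apply_eq_zero (h : IsProjectiveSplitting T L M K τlo τhi z w X Y φ) (w' : E) :
    (L†) (M w') = 0 :=
  ext_inner_left ℝ fun v => by
    rw [ContinuousLinearMap.adjoint_inner_right, h.orthogonal, inner_zero_right]

theorem adjoint_apply_eq_zero' (h : IsProjectiveSplitting T L M K τlo τhi z w X Y φ) (z' : H) :
    (M†) (L z') = 0 :=
  ext_inner_left ℝ fun v => by
    rw [ContinuousLinearMap.adjoint_inner_right, real_inner_comm, h.orthogonal, inner_zero_right]

theorem isSeparatingProjectionSequence (h : IsProjectiveSplitting T L M K τlo τhi z w X Y φ) :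
    IsSeparatingProjectionSequence {q : WithLp 2 (H × E) | M q.snd ∈ T (L q.fst)} τlo τhi
      (fun k => WithLp.toLp 2 (z k, w k)) (fun k => WithLp.toLp 2 ((L†) (Y k), (M†) (X k))) φ where
  nonneg k := (h.isSeparatingStep k).nonneg
  separates q hq k := by
    have hsep := (h.isSeparatingStep k).separates _ _ hq
    rw [WithLp.prod_inner_apply]
    change φ k ≤ ⟪z k - q.fst, (L†) (Y k)⟫ + ⟪w k - q.snd, (M†) (X k)⟫
    simp only [ContinuousLinearMap.adjoint_inner_right, map_sub, inner_sub_left, inner_sub_right,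
      h.orthogonal, real_inner_comm (M _) (X k)] at hsep ⊢
    linarith
  step k := by
    obtain ⟨τ, hτ, hz, hw⟩ := h.update k
    refine ⟨τ, hτ, ?_⟩
    rw [WithLp.prod_norm_sq_eq_of_L2, hz, hw]
    rfl

theorem norm_normal_sq_le (h : IsProjectiveSplitting T L M K τlo τhi z w X Y φ) (k : ℕ) :
    ‖WithLp.toLp 2 ((L†) (Y k), (M†) (X k))‖ ^ 2 ≤
      (‖L‖ ^ 2 + ‖M‖ ^ 2) * K * (φ k * (1 + φ k)) := by
  obtain ⟨y', -, hres⟩ := (h.isSeparatingStep k).exists_residual_le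
  have hY : ‖(L†) (Y k)‖ ^ 2 ≤ ‖L‖ ^ 2 * ‖Y k - M (w k)‖ ^ 2 := by
    have hle := (L†).le_opNorm (Y k - M (w k))
    rw [map_sub, h.adjoint_apply_eq_zero, sub_zero, LinearIsometryEquiv.norm_map] at hle
    rw [← mul_pow]
    gcongr
  have hX : ‖(M†) (X k)‖ ^ 2 ≤ ‖M‖ ^ 2 * ‖X k - L (z k)‖ ^ 2 := by
    have hle := (M†).le_opNorm (X k - L (z k))
    rw [map_sub, h.adjoint_apply_eq_zero', sub_zero, LinearIsometryEquiv.norm_map] at hle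
    rw [← mul_pow]
    gcongr
  rw [WithLp.prod_norm_sq_eq_of_L2, mul_assoc]
  calc ‖(L†) (Y k)‖ ^ 2 + ‖(M†) (X k)‖ ^ 2
      ≤ ‖L‖ ^ 2 * ‖Y k - M (w k)‖ ^ 2 + ‖M‖ ^ 2 * ‖X k - L (z k)‖ ^ 2 := add_le_add hY hX
    _ ≤ (‖L‖ ^ 2 + ‖M‖ ^ 2) *
        (‖X k - L (z k)‖ ^ 2 + ‖Y k - M (w k)‖ ^ 2 + ‖y' - M (w k)‖ ^ 2) := by
      nlinarith [sq_nonneg ‖L‖, sq_nonneg ‖M‖, sq_nonneg ‖X k - L (z k)‖,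
        sq_nonneg ‖Y k - M (w k)‖, sq_nonneg ‖y' - M (w k)‖]
    _ ≤ _ := by gcongr

theorem exists_tendsto_sub (h : IsProjectiveSplitting T L M K τlo τhi z w X Y φ)
    (hφ : Tendsto φ atTop (nhds 0)) : ∃ Y' : ℕ → 𝓗, (∀ k, Y' k ∈ T (X k)) ∧
      Tendsto (fun k => X k - L (z k)) atTop (nhds 0) ∧
      Tendsto (fun k => Y k - M (w k)) atTop (nhds 0) ∧
      Tendsto (fun k => Y' k - M (w k)) atTop (nhds 0) := by
  choose Y' hY' hres using fun k => (h.isSeparatingStep k).exists_residual_le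
  have hlim : Tendsto (fun k => K * (φ k * (1 + φ k))) atTop (nhds 0) := by
    simpa using (hφ.mul (hφ.const_add 1)).const_mul K
  refine ⟨Y', hY', ?_, ?_, ?_⟩ <;>
    refine tendsto_zero_of_norm_sq_le (fun k => le_trans ?_ (hres k)) hlim <;>
    linarith [sq_nonneg ‖X k - L (z k)‖, sq_nonneg ‖Y k - M (w k)‖, sq_nonneg ‖Y' k - M (w k)‖]

theorem mem_of_weakTendsto (h : IsProjectiveSplitting T L M K τlo τhi z w X Y φ)
    (hT : IsMaximalMonotone T) (hφ : Tendsto φ atTop (nhds 0)) {R : ℝ} (hz : ∀ k, ‖z k‖ ≤ R)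
    (hw : ∀ k, ‖w k‖ ≤ R) {l : Filter ℕ} [l.NeBot] (hl : l ≤ atTop) {a : H} {b : E}
    (ha : WeakTendsto z l a) (hb : WeakTendsto w l b) : M b ∈ T (L a) := by
  obtain ⟨Y', hY', hX, -, hYw⟩ := h.exists_tendsto_sub hφ
  refine hT.mem_of_weakTendsto hY' ((ha.clm_apply L).of_tendsto_sub (hX.mono_left hl))
    ((hb.clm_apply M).of_tendsto_sub (hYw.mono_left hl)) ?_
  refine tendsto_inner_of_tendsto_sub (fun k => L.le_opNorm_of_le (hz k))
    (fun k => M.le_opNorm_of_le (hw k)) (hX.mono_left hl) (hYw.mono_left hl) ?_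
  simp only [h.orthogonal, tendsto_const_nhds]

theorem exists_weakTendsto (h : IsProjectiveSplitting T L M K τlo τhi z w X Y φ)
    (hT : IsMaximalMonotone T) (hτlo : 0 < τlo) (hτhi : τhi < 2)
    (hS : ∃ z' w', M w' ∈ T (L z')) :
    ∃ a b, M b ∈ T (L a) ∧ WeakTendsto z atTop a ∧ WeakTendsto w atTop b ∧
      WeakTendsto X atTop (L a) ∧ WeakTendsto Y atTop (M b) := by
  obtain ⟨z', w', hz'w'⟩ := hS
  have hseq := h.isSeparatingProjectionSequence
  have hφ : Tendsto φ atTop (nhds 0) :=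
    hseq.tendsto_zero hτlo hτhi ⟨WithLp.toLp 2 (z', w'), hz'w'⟩ h.norm_normal_sq_le
  have hfejer := fun s => hseq.antitone_norm_sub hτlo.le hτhi.le (a := s)
  have hbdd := norm_le_of_antitone_norm_sub (hfejer (WithLp.toLp 2 (z', w')) hz'w')
  have hfst {l : Filter ℕ} {q : WithLp 2 (H × E)}
      (hq : WeakTendsto (fun k => WithLp.toLp 2 (z k, w k)) l q) : WeakTendsto z l q.fst :=
    hq.clm_apply (WithLp.fstL 2 ℝ H E)
  have hsnd {l : Filter ℕ} {q : WithLp 2 (H × E)}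
      (hq : WeakTendsto (fun k => WithLp.toLp 2 (z k, w k)) l q) : WeakTendsto w l q.snd :=
    hq.clm_apply (WithLp.sndL 2 ℝ H E)
  obtain ⟨q, hq, hlim⟩ := exists_weakTendsto_of_fejer ⟨WithLp.toLp 2 (z', w'), hz'w'⟩
    hfejer fun U hU q hq =>
    h.mem_of_weakTendsto hT hφ (fun k => (WithLp.norm_fst_le _ _).trans (hbdd k))
      (fun k => (WithLp.norm_snd_le _ _).trans (hbdd k)) hU (hfst hq) (hsnd hq)
  obtain ⟨-, -, hX, hY, -⟩ := h.exists_tendsto_sub hφ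
  exact ⟨q.fst, q.snd, hq, hfst hlim, hsnd hlim, ((hfst hlim).clm_apply L).of_tendsto_sub hX,
    ((hsnd hlim).clm_apply M).of_tendsto_sub hY⟩

end IsProjectiveSplitting

/-- Measuring the first component of `(z, w)` with `γ ‖·‖²` amounts to replacing `z` by `√γ • z`
and `L` by `(√γ)⁻¹ • L`. -/
theorem isProjectiveSplitting_of_weight {T : 𝓗 → Set 𝓗} {L : H →L[ℝ] 𝓗} {M : E →L[ℝ] 𝓗}
    {K τlo τhi γ : ℝ} {z : ℕ → H} {w : ℕ → E} {X Y : ℕ → 𝓗} {φ : ℕ → ℝ} (hγ : 0 < γ)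
    (horth : ∀ z w, ⟪L z, M w⟫ = 0)
    (hstep : ∀ k, IsSeparatingStep T K (L (z k)) (M (w k)) (X k) (Y k) (φ k))
    (hupdate : ∀ k, ∃ τ ∈ Set.Icc τlo τhi,
      z (k + 1) = z k -
        (γ⁻¹ * (τ * φ k / (γ⁻¹ * ‖(L†) (Y k)‖ ^ 2 + ‖(M†) (X k)‖ ^ 2))) • (L†) (Y k) ∧
      w (k + 1) = w k -
        (τ * φ k / (γ⁻¹ * ‖(L†) (Y k)‖ ^ 2 + ‖(M†) (X k)‖ ^ 2)) • (M†) (X k)) :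
    IsProjectiveSplitting T ((√γ)⁻¹ • L) M K τlo τhi (fun k => √γ • z k) w X Y φ where
  orthogonal z w := by
    rw [smul_apply, real_inner_smul_left, horth, mul_zero]
  isSeparatingStep k := by
    simpa only [smul_apply, map_smul, smul_inv_smul₀ (Real.sqrt_ne_zero'.2 hγ)] using hstep k
  update k := by
    obtain ⟨τ, hτ, hz, hw⟩ := hupdate k
    have hnormal : (((√γ)⁻¹ • L)†) (Y k) = (√γ)⁻¹ • (L†) (Y k) := by
      simp
    have hnorm : ‖(√γ)⁻¹ • (L†) (Y k)‖ ^ 2 = γ⁻¹ * ‖(L†) (Y k)‖ ^ 2 := by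
      rw [norm_smul, mul_pow, Real.norm_eq_abs, sq_abs, inv_pow, Real.sq_sqrt hγ.le]
    refine ⟨τ, hτ, ?_, ?_⟩ <;> rw [hnormal, hnorm]
    · have hsqrt : √γ * γ⁻¹ = (√γ)⁻¹ := by
        rw [← div_eq_mul_inv, Real.sqrt_div_self]
      rw [hz, smul_sub, smul_smul, smul_smul, ← mul_assoc, hsqrt, mul_comm (√γ)⁻¹]
    · exact hw

end AbstractProjectiveSplitting

section BlockProjectiveSplitting

open scoped InnerProduct

variable {H : Type*} [NormedAddCommGroup H] [InnerProductSpace ℝ H]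
  {κ : Type*} {E : κ → Type*} [∀ i, NormedAddCommGroup (E i)] [∀ i, InnerProductSpace ℝ (E i)]

theorem IsSeparatingStep.mono {T : H → Set H} {K K' : ℝ} {p w x y : H} {f : ℝ}
    (h : IsSeparatingStep T K p w x y f) (hK : K ≤ K') : IsSeparatingStep T K' p w x y f where
  nonneg := h.nonneg
  separates := h.separates
  exists_residual_le := by
    obtain ⟨y', hy', hle⟩ := h.exists_residual_le
    have := h.nonneg
    exact ⟨y', hy', hle.trans (by gcongr)⟩

theorem IsSeparatingStep.piLp [Fintype κ] {T : ∀ i, E i → Set (E i)} {K : ℝ} (hK : 0 ≤ K)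
    {p w x y : PiLp 2 E} {f : κ → ℝ}
    (h : ∀ i, IsSeparatingStep (T i) K (p i) (w i) (x i) (y i) (f i)) :
    IsSeparatingStep (fun x : PiLp 2 E => {y : PiLp 2 E | ∀ i, y i ∈ T i (x i)}) K p w x y
      (∑ i, f i) where
  nonneg := Finset.sum_nonneg fun i _ => (h i).nonneg
  separates a b hb := by
    simp only [PiLp.inner_apply, ← Finset.sum_add_distrib]
    exact Finset.sum_le_sum fun i _ => (h i).separates _ _ (hb i)
  exists_residual_le := by
    choose y' hy' hle using fun i => (h i).exists_residual_le
    refine ⟨WithLp.toLp 2 y', hy', ?_⟩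
    simp only [PiLp.norm_sq_eq_of_L2, ← Finset.sum_add_distrib]
    refine (Finset.sum_le_sum fun i _ => hle i).trans ?_
    rw [Finset.sum_mul, Finset.mul_sum]
    refine Finset.sum_le_sum fun i _ => ?_
    have hi := (h i).nonneg
    gcongr
    exact Finset.single_le_sum (fun j _ => (h j).nonneg) (Finset.mem_univ i)

theorem IsSeparatingStep.prodLp {H' : Type*} [NormedAddCommGroup H'] [InnerProductSpace ℝ H']
    {S : H → Set H} {T : H' → Set H'} {K : ℝ} (hK : 0 ≤ K) {p w x y : WithLp 2 (H × H')}
    {f g : ℝ} (hS : IsSeparatingStep S K p.fst w.fst x.fst y.fst f)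
    (hT : IsSeparatingStep T K p.snd w.snd x.snd y.snd g) :
    IsSeparatingStep (fun x : WithLp 2 (H × H') =>
      {y : WithLp 2 (H × H') | y.fst ∈ S x.fst ∧ y.snd ∈ T x.snd}) K p w x y (f + g) where
  nonneg := add_nonneg hS.nonneg hT.nonneg
  separates a b hb := by
    simp only [WithLp.prod_inner_apply]
    have := add_le_add (hS.separates _ _ hb.1) (hT.separates _ _ hb.2)
    exact (add_add_add_comm _ _ _ _).trans_le this
  exists_residual_le := by
    obtain ⟨u, hu, hule⟩ := hS.exists_residual_le
    obtain ⟨v, hv, hvle⟩ := hT.exists_residual_le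
    refine ⟨WithLp.toLp 2 (u, v), ⟨hu, hv⟩, ?_⟩
    have hfg : 0 ≤ K * (f * g) := mul_nonneg hK (mul_nonneg hS.nonneg hT.nonneg)
    simp only [WithLp.prod_norm_sq_eq_of_L2]
    change ‖x.fst - p.fst‖ ^ 2 + ‖x.snd - p.snd‖ ^ 2 + (‖y.fst - w.fst‖ ^ 2 + ‖y.snd - w.snd‖ ^ 2) +
      (‖u - w.fst‖ ^ 2 + ‖v - w.snd‖ ^ 2) ≤ _
    linarith

/-- The map `z ↦ ((G i z)ᵢ, z)` collecting the arguments of all the operators of a composite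
inclusion whose last block acts on the space of `z` itself. -/
noncomputable def blockPrimal (G : ∀ i, H →L[ℝ] E i) : H →L[ℝ] WithLp 2 (PiLp 2 E × H) :=
  (WithLp.prodContinuousLinearEquiv 2 ℝ (PiLp 2 E) H).symm.toContinuousLinearMap ∘L
    (((PiLp.continuousLinearEquiv 2 ℝ E).symm.toContinuousLinearMap ∘L
      ContinuousLinearMap.pi G).prod (ContinuousLinearMap.id ℝ H))

theorem blockPrimal_apply (G : ∀ i, H →L[ℝ] E i) (z : H) :
    blockPrimal G z = WithLp.toLp 2 (WithLp.toLp 2 fun i => G i z, z) := rfl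

variable [Fintype κ] [CompleteSpace H] [∀ i, CompleteSpace (E i)]

/-- The map `w ↦ (w, -∑ i, (G i)† (w i))` completing dual variables by the one of the last block.
Its range is orthogonal to that of `blockPrimal G`. -/
noncomputable def blockDual (G : ∀ i, H →L[ℝ] E i) : PiLp 2 E →L[ℝ] WithLp 2 (PiLp 2 E × H) :=
  (WithLp.prodContinuousLinearEquiv 2 ℝ (PiLp 2 E) H).symm.toContinuousLinearMap ∘L
    ((ContinuousLinearMap.id ℝ (PiLp 2 E)).prod
      (-∑ i, (G i)† ∘L PiLp.proj 2 E i))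

theorem blockDual_apply (G : ∀ i, H →L[ℝ] E i) (w : PiLp 2 E) :
    blockDual G w = WithLp.toLp 2 (w, -∑ i, ((G i)†) (w i)) := by
  simp [blockDual]

theorem inner_blockPrimal_left (G : ∀ i, H →L[ℝ] E i) (z : H) (Y : WithLp 2 (PiLp 2 E × H)) :
    ⟪blockPrimal G z, Y⟫ = ⟪z, ∑ i, ((G i)†) (Y.fst i) + Y.snd⟫ := by
  simp [blockPrimal_apply, WithLp.prod_inner_apply, PiLp.inner_apply, inner_add_right, inner_sum,
    ContinuousLinearMap.adjoint_inner_right]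

theorem adjoint_blockPrimal_apply (G : ∀ i, H →L[ℝ] E i) (Y : WithLp 2 (PiLp 2 E × H)) :
    ((blockPrimal G)†) Y = ∑ i, ((G i)†) (Y.fst i) + Y.snd :=
  ext_inner_left ℝ fun z => by
    rw [ContinuousLinearMap.adjoint_inner_right, inner_blockPrimal_left]

theorem adjoint_blockDual_apply (G : ∀ i, H →L[ℝ] E i) (X : WithLp 2 (PiLp 2 E × H)) :
    ((blockDual G)†) X = WithLp.toLp 2 fun i => X.fst i - G i X.snd :=
  ext_inner_left ℝ fun w => by
    rw [ContinuousLinearMap.adjoint_inner_right, blockDual_apply, WithLp.prod_inner_apply]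
    simp only [inner_neg_left, sum_inner, ContinuousLinearMap.adjoint_inner_left, PiLp.inner_apply,
      inner_sub_right, Finset.sum_sub_distrib, ← sub_eq_add_neg]
    rfl

theorem inner_blockPrimal_blockDual (G : ∀ i, H →L[ℝ] E i) (z : H) (w : PiLp 2 E) :
    ⟪blockPrimal G z, blockDual G w⟫ = 0 := by
  rw [inner_blockPrimal_left, blockDual_apply]
  exact (congrArg _ (add_neg_cancel _)).trans (inner_zero_right z)

theorem isProjectiveSplitting_block {G : ∀ i, H →L[ℝ] E i} {T : ∀ i, E i → Set (E i)}
    {Tn : H → Set H} {K τlo τhi γ : ℝ} (hK : 0 ≤ K) (hτ : τlo ≤ τhi) (hγ : 0 < γ)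
    {z : ℕ → H} {w x y : ℕ → ∀ i, E i} {xn yn : ℕ → H} {f : ℕ → κ → ℝ} {fn : ℕ → ℝ}
    (hstep : ∀ k i, IsSeparatingStep (T i) K (G i (z k)) (w k i) (x k i) (y k i) (f k i))
    (hstepn : ∀ k,
      IsSeparatingStep Tn K (z k) (-∑ i, ((G i)†) (w k i)) (xn k) (yn k) (fn k))
    {u : ℕ → ∀ i, E i} (hu : ∀ k i, u k i = x k i - G i (xn k))
    {v : ℕ → H} (hv : ∀ k, v k = ∑ i, ((G i)†) (y k i) + yn k)
    {φ : ℕ → ℝ} (hφ : ∀ k, φ k = ∑ i, f k i + fn k)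
    {π : ℕ → ℝ} (hπ : ∀ k, π k = γ⁻¹ * ‖v k‖ ^ 2 + ∑ i, ‖u k i‖ ^ 2)
    (hupdate : ∀ k,
      (0 < φ k → ∃ τ ∈ Set.Icc τlo τhi,
        z (k + 1) = z k - (γ⁻¹ * (τ * φ k / π k)) • v k ∧
        ∀ i, w (k + 1) i = w k i - (τ * φ k / π k) • u k i) ∧
      (φ k ≤ 0 → z (k + 1) = z k ∧ ∀ i, w (k + 1) i = w k i)) :
    IsProjectiveSplitting (fun X : WithLp 2 (PiLp 2 E × H) =>
        {Y : WithLp 2 (PiLp 2 E × H) | (∀ i, Y.fst i ∈ T i (X.fst i)) ∧ Y.snd ∈ Tn X.snd})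
      ((√γ)⁻¹ • blockPrimal G) (blockDual G) K τlo τhi (fun k => √γ • z k)
      (fun k => WithLp.toLp 2 (w k)) (fun k => WithLp.toLp 2 (WithLp.toLp 2 (x k), xn k))
      (fun k => WithLp.toLp 2 (WithLp.toLp 2 (y k), yn k)) φ := by
  have hsteps k := IsSeparatingStep.prodLp (p := blockPrimal G (z k))
    (w := blockDual G (WithLp.toLp 2 (w k))) (x := WithLp.toLp 2 (WithLp.toLp 2 (x k), xn k))
    (y := WithLp.toLp 2 (WithLp.toLp 2 (y k), yn k)) hK
    (.piLp hK (hstep k)) (by rw [blockDual_apply]; exact hstepn k)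
  simp only [← hφ] at hsteps
  refine isProjectiveSplitting_of_weight hγ (inner_blockPrimal_blockDual G) hsteps fun k => ?_
  have hv' : ((blockPrimal G)†) (WithLp.toLp 2 (WithLp.toLp 2 (y k), yn k)) = v k := by
    rw [adjoint_blockPrimal_apply, hv]; rfl
  have hu' : ((blockDual G)†) (WithLp.toLp 2 (WithLp.toLp 2 (x k), xn k)) =
      WithLp.toLp 2 (u k) := by
    rw [adjoint_blockDual_apply, funext (hu k)]; rfl
  rw [hv', hu', PiLp.norm_sq_eq_of_L2, ← hπ]
  rcases (hsteps k).nonneg.lt_or_eq with hpos | hzero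
  · obtain ⟨τ, hτ, hz, hw⟩ := (hupdate k).1 hpos
    exact ⟨τ, hτ, hz, congrArg (WithLp.toLp 2) (funext hw)⟩
  · obtain ⟨hz, hw⟩ := (hupdate k).2 hzero.ge
    exact ⟨τlo, Set.left_mem_Icc.2 hτ, by simp [← hzero, hz], by simp [← hzero, funext hw]⟩

theorem exists_weakTendsto_of_isSeparatingStep {G : ∀ i, H →L[ℝ] E i}
    {T : ∀ i, E i → Set (E i)} {Tn : H → Set H} (hT : ∀ i, IsMaximalMonotone (T i))
    (hTn : IsMaximalMonotone Tn)
    (hS : ∃ (z : H) (w : ∀ i, E i), (∀ i, w i ∈ T i (G i z)) ∧ -∑ i, ((G i)†) (w i) ∈ Tn z)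
    {K τlo τhi γ : ℝ} (hK : 0 ≤ K) (hτlo : 0 < τlo) (hτ : τlo ≤ τhi) (hτhi : τhi < 2)
    (hγ : 0 < γ) {z : ℕ → H} {w x y : ℕ → ∀ i, E i} {xn yn : ℕ → H} {f : ℕ → κ → ℝ}
    {fn : ℕ → ℝ}
    (hstep : ∀ k i, IsSeparatingStep (T i) K (G i (z k)) (w k i) (x k i) (y k i) (f k i))
    (hstepn : ∀ k,
      IsSeparatingStep Tn K (z k) (-∑ i, ((G i)†) (w k i)) (xn k) (yn k) (fn k))
    {u : ℕ → ∀ i, E i} (hu : ∀ k i, u k i = x k i - G i (xn k))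
    {v : ℕ → H} (hv : ∀ k, v k = ∑ i, ((G i)†) (y k i) + yn k)
    {φ : ℕ → ℝ} (hφ : ∀ k, φ k = ∑ i, f k i + fn k)
    {π : ℕ → ℝ} (hπ : ∀ k, π k = γ⁻¹ * ‖v k‖ ^ 2 + ∑ i, ‖u k i‖ ^ 2)
    (hupdate : ∀ k,
      (0 < φ k → ∃ τ ∈ Set.Icc τlo τhi,
        z (k + 1) = z k - (γ⁻¹ * (τ * φ k / π k)) • v k ∧
        ∀ i, w (k + 1) i = w k i - (τ * φ k / π k) • u k i) ∧
      (φ k ≤ 0 → z (k + 1) = z k ∧ ∀ i, w (k + 1) i = w k i)) :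
    ∃ (a : H) (b : ∀ i, E i), WeakTendsto z atTop a ∧
      (∀ i, WeakTendsto (fun k => w k i) atTop (b i)) ∧
      WeakTendsto (fun k => -∑ i, ((G i)†) (w k i)) atTop (-∑ i, ((G i)†) (b i)) ∧
      (∀ i, b i ∈ T i (G i a)) ∧ -∑ i, ((G i)†) (b i) ∈ Tn a ∧
      (∀ i, WeakTendsto (fun k => x k i) atTop (G i a)) ∧ WeakTendsto xn atTop a ∧
      (∀ i, WeakTendsto (fun k => y k i) atTop (b i)) ∧
      WeakTendsto yn atTop (-∑ i, ((G i)†) (b i)) := by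
  obtain ⟨z', w', hw', hwn'⟩ := hS
  have hγ' := Real.sqrt_ne_zero'.2 hγ
  obtain ⟨a, b, hab, hz, hw, hX, hY⟩ :=
    (isProjectiveSplitting_block hK hτ hγ hstep hstepn hu hv hφ hπ hupdate).exists_weakTendsto
      ((IsMaximalMonotone.piLp hT).prodLp hTn) hτlo hτhi ⟨√γ • z', WithLp.toLp 2 w', by
        rw [smul_apply, map_smul, inv_smul_smul₀ hγ', blockDual_apply]; exact ⟨hw', hwn'⟩⟩
  rw [smul_apply, ← map_smul, blockDual_apply] at hab
  rw [smul_apply, ← map_smul] at hX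
  rw [blockDual_apply] at hY
  have hwn := (hw.clm_apply (blockDual G)).clm_apply (WithLp.sndL 2 ℝ (PiLp 2 E) H)
  simp only [blockDual_apply] at hwn
  have hfst (i : κ) {U : ℕ → WithLp 2 (PiLp 2 E × H)} {c : WithLp 2 (PiLp 2 E × H)}
      (h : WeakTendsto U atTop c) : WeakTendsto (fun k => (U k).fst i) atTop (c.fst i) :=
    (h.clm_apply (WithLp.fstL 2 ℝ (PiLp 2 E) H)).clm_apply (PiLp.proj 2 E i)
  refine ⟨(√γ)⁻¹ • a, b, ?_, fun i => hw.clm_apply (PiLp.proj 2 E i), hwn, hab.1, hab.2,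
    fun i => hfst i hX, hX.clm_apply (WithLp.sndL 2 ℝ (PiLp 2 E) H), fun i => hfst i hY,
    hY.clm_apply (WithLp.sndL 2 ℝ (PiLp 2 E) H)⟩
  simpa [smul_inv_smul₀ hγ'] using hz.clm_apply ((√γ)⁻¹ • ContinuousLinearMap.id ℝ H)

end BlockProjectiveSplitting

section Cocoercive

variable {E : Type*} [NormedAddCommGroup E] [InnerProductSpace ℝ E] {C : E → E} {β : ℝ}

theorem norm_sub_le_of_cocoercive (hβ : 0 < β)
    (hC : ∀ x y, β * ‖C x - C y‖ ^ 2 ≤ ⟪x - y, C x - C y⟫) (x y : E) :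
    ‖C x - C y‖ ≤ β⁻¹ * ‖x - y‖ := by
  rw [inv_mul_eq_div, le_div_iff₀ hβ]
  have hcs := (hC x y).trans (real_inner_le_norm (x - y) (C x - C y))
  by_contra! hlt
  nlinarith [norm_nonneg (C x - C y), norm_nonneg (x - y)]

theorem neg_inner_sub_le_of_cocoercive (hβ : 0 < β)
    (hC : ∀ x y, β * ‖C x - C y‖ ^ 2 ≤ ⟪x - y, C x - C y⟫) (a p x : E) :
    -⟪a - x, C a - C p⟫ ≤ 1 / (4 * β) * ‖x - p‖ ^ 2 := by
  have hsplit : ⟪a - x, C a - C p⟫ = ⟪a - p, C a - C p⟫ - ⟪x - p, C a - C p⟫ := by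
    rw [← inner_sub_left, sub_sub_sub_cancel_right]
  have hcs := real_inner_le_norm (x - p) (C a - C p)
  have hsq : 0 ≤ β * (‖C a - C p‖ - ‖x - p‖ / (2 * β)) ^ 2 := by positivity
  have hexpand : β * (‖C a - C p‖ - ‖x - p‖ / (2 * β)) ^ 2 =
      β * ‖C a - C p‖ ^ 2 - ‖x - p‖ * ‖C a - C p‖ + 1 / (4 * β) * ‖x - p‖ ^ 2 := by
    field_simp
    ring
  linarith [hC a p]

end Cocoercive

theorem norm_sub_linearization_le {E F : Type*} [NormedAddCommGroup E] [NormedSpace ℝ E]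
    [NormedAddCommGroup F] [NormedSpace ℝ F] {D : E → F} {D' : E → E →L[ℝ] F}
    (hD : ∀ x, HasFDerivAt D (D' x) x) {m : ℝ} (hm : ∀ x y, ‖D' x - D' y‖ ≤ m * ‖x - y‖)
    (p x : E) : ‖D x - (D p + D' p (x - p))‖ ≤ m / 2 * ‖x - p‖ ^ 2 := by
  set d := x - p with hd
  have hderiv (t : ℝ) : HasDerivAt (fun t : ℝ => D (p + t • d) - (D p + t • D' p d))
      (D' (p + t • d) d - D' p d) t := by
    have hline : HasDerivAt (fun t : ℝ => p + t • d) d t := by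
      simpa using ((hasDerivAt_id t).smul_const d).const_add p
    have hlinear : HasDerivAt (fun t : ℝ => D p + t • D' p d) (D' p d) t := by
      simpa using ((hasDerivAt_id t).smul_const (D' p d)).const_add (D p)
    exact ((hD _).comp_hasDerivAt t hline).sub hlinear
  have hbound (t : ℝ) :
      HasDerivAt (fun t : ℝ => m / 2 * ‖d‖ ^ 2 * t ^ 2) (m * ‖d‖ ^ 2 * t) t :=
    ((hasDerivAt_pow 2 t).const_mul (m / 2 * ‖d‖ ^ 2)).congr_deriv (by push_cast; ring)
  have hle (t : ℝ) (ht : t ∈ Set.Ico (0 : ℝ) 1) :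
      ‖D' (p + t • d) d - D' p d‖ ≤ m * ‖d‖ ^ 2 * t := by
    have hlip := hm (p + t • d) p
    rw [add_sub_cancel_left, norm_smul, Real.norm_of_nonneg ht.1] at hlip
    calc ‖D' (p + t • d) d - D' p d‖ ≤ ‖D' (p + t • d) - D' p‖ * ‖d‖ := by
          rw [← sub_apply]; exact ContinuousLinearMap.le_opNorm _ _
      _ ≤ m * (t * ‖d‖) * ‖d‖ := by gcongr
      _ = m * ‖d‖ ^ 2 * t := by ring
  have hone := image_norm_le_of_norm_deriv_right_le_deriv_boundary (a := (0 : ℝ)) (b := 1)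
    (fun t _ => (hderiv t).continuousAt.continuousWithinAt)
    (fun t _ => (hderiv t).hasDerivWithinAt) (by simp) hbound hle (Set.right_mem_Icc.2 zero_le_one)
  simpa [hd] using hone

section StepResidual

variable {c R M ρ r g : ℝ}

theorem sq_displacement_le (hc : 0 < c) (hρ : 0 < ρ) (hρR : ρ ≤ R) (hg : c * (ρ⁻¹ * r ^ 2) ≤ g) :
    r ^ 2 ≤ R / c * (g * (1 + g)) := by
  have hg0 : 0 ≤ g := le_trans (by positivity) hg
  have hR : 0 ≤ R := hρ.le.trans hρR
  have hd : ρ⁻¹ * r ^ 2 ≤ g / c := by rwa [le_div_iff₀' hc]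
  calc r ^ 2 = ρ * (ρ⁻¹ * r ^ 2) := by field_simp
    _ ≤ R * (g / c) := by gcongr
    _ = R / c * (g * 1) := by ring
    _ ≤ R / c * (g * (1 + g)) := by gcongr; linarith

theorem sq_dual_residual_le {N : ℝ} (hc0 : 0 < c) (hc1 : c ≤ 1) (hρ : 0 < ρ)
    (hinv : ρ⁻¹ ≤ M * (1 + ρ⁻¹ * r ^ 2)) (hg : c * (ρ⁻¹ * r ^ 2) ≤ g) (hN0 : 0 ≤ N)
    (hN : N ≤ 2 * (ρ⁻¹ * r)) : N ^ 2 ≤ 4 * M / c ^ 2 * (g * (1 + g)) := by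
  have hg0 : 0 ≤ g := le_trans (by positivity) hg
  have hd : ρ⁻¹ * r ^ 2 ≤ g / c := by rwa [le_div_iff₀' hc0]
  have hM : 0 ≤ M :=
    (pos_of_mul_pos_left ((inv_pos.2 hρ).trans_le hinv) (by positivity)).le
  calc N ^ 2 ≤ (2 * (ρ⁻¹ * r)) ^ 2 := by gcongr
    _ = 4 * (ρ⁻¹ * (ρ⁻¹ * r ^ 2)) := by ring
    _ ≤ 4 * (M * (1 + g / c) * (g / c)) := by gcongr; exact hinv.trans (by gcongr)
    _ = 4 * M / c ^ 2 * (g * (c + g)) := by field_simp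
    _ ≤ 4 * M / c ^ 2 * (g * (1 + g)) := by gcongr

variable {E : Type*} [NormedAddCommGroup E] [InnerProductSpace ℝ E] {b κ : ℝ} {p q x e : E}

theorem coercive_of_norm_error_le (hρ : 0 < ρ) (hq : q = ρ⁻¹ • (p - x) + e)
    (he : ‖e‖ ≤ κ * ‖x - p‖) (hκ : ρ * (κ + b) ≤ 1 - c) :
    c * (ρ⁻¹ * ‖x - p‖ ^ 2) ≤ ⟪p - x, q⟫ - b * ‖x - p‖ ^ 2 := by
  have hcs : -(‖x - p‖ * ‖e‖) ≤ ⟪p - x, e⟫ := by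
    rw [norm_sub_rev]
    exact (abs_le.1 (abs_real_inner_le_norm _ _)).1
  have hκ' : κ + b ≤ ρ⁻¹ * (1 - c) := (le_inv_mul_iff₀ hρ).2 hκ
  have herr : ‖x - p‖ * ‖e‖ ≤ ‖x - p‖ * (κ * ‖x - p‖) := by gcongr
  rw [hq, inner_add_right, inner_smul_right, real_inner_self_eq_norm_sq, norm_sub_rev p x]
  nlinarith [mul_le_mul_of_nonneg_right hκ' (sq_nonneg ‖x - p‖)]

theorem norm_le_of_norm_error_le (hρ : 0 < ρ) (hc : 0 ≤ c) (hb : 0 ≤ b)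
    (hq : q = ρ⁻¹ • (p - x) + e) (he : ‖e‖ ≤ κ * ‖x - p‖) (hκ : ρ * (κ + b) ≤ 1 - c) :
    ‖q‖ ≤ 2 * (ρ⁻¹ * ‖x - p‖) := by
  have hκ' : κ ≤ ρ⁻¹ := by
    have := (le_inv_mul_iff₀ hρ).2 (hκ.trans (sub_le_self 1 hc))
    linarith
  calc ‖q‖ ≤ ‖ρ⁻¹ • (p - x)‖ + ‖e‖ := hq ▸ norm_add_le _ _
    _ ≤ ρ⁻¹ * ‖x - p‖ + ρ⁻¹ * ‖x - p‖ := by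
      rw [norm_smul, Real.norm_of_nonneg (inv_pos.2 hρ).le, norm_sub_rev p x]
      exact add_le_add_right (he.trans (by gcongr)) _
    _ = 2 * (ρ⁻¹ * ‖x - p‖) := by ring

end StepResidual

/-- A sum `A + B + C + D` of a maximal monotone, a monotone `ℓ`-Lipschitz, a `β`-cocoercive and a
monotone differentiable operator, the last one with derivative `D'` which is `m`-Lipschitz. -/
structure SplitOperator (E : Type*) [NormedAddCommGroup E] [InnerProductSpace ℝ E] where
  A : E → Set E
  isMaximalMonotone : IsMaximalMonotone A
  B : E → E
  ℓ : ℝ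
  ℓ_nonneg : 0 ≤ ℓ
  inner_B_nonneg : ∀ x y, 0 ≤ ⟪x - y, B x - B y⟫
  norm_B_sub_le : ∀ x y, ‖B x - B y‖ ≤ ℓ * ‖x - y‖
  C : E → E
  β : ℝ
  β_pos : 0 < β
  cocoercive : ∀ x y, β * ‖C x - C y‖ ^ 2 ≤ ⟪x - y, C x - C y⟫
  D : E → E
  D' : E → E →L[ℝ] E
  hasFDerivAt : ∀ x, HasFDerivAt D (D' x) x
  inner_D_nonneg : ∀ x y, 0 ≤ ⟪x - y, D x - D y⟫
  m : ℝ
  m_nonneg : 0 ≤ m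
  norm_D'_sub_le : ∀ x y, ‖D' x - D' y‖ ≤ m * ‖x - y‖

namespace SplitOperator

variable {E : Type*} [NormedAddCommGroup E] [InnerProductSpace ℝ E] (T : SplitOperator E)

/-- The sum operator with `C` evaluated at `p` instead of at the current point: the graph that a
step which is explicit in `C` can reach. -/
def lagged (p x : E) : Set E := {y | y - T.B x - T.C p - T.D x ∈ T.A x}

/-- The operator `A + B + C + D`. -/
def sum (x : E) : Set E := T.lagged x x

/-- The contribution of one block to the separating function `φ`. The subtracted square pays for
evaluating `C` at `p`. -/
noncomputable def gap (p w x y : E) : ℝ := ⟪p - x, y - w⟫ - 1 / (4 * T.β) * ‖x - p‖ ^ 2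

theorem isCalmOnBalls : IsCalmOnBalls fun x => T.B x + T.C x + T.D x := by
  refine fun p R => ⟨T.ℓ + T.β⁻¹ + (‖T.D' p‖ + T.m / 2 * R), fun x hx => ?_⟩
  have hm := T.m_nonneg
  have hD : ‖T.D x - T.D p‖ ≤ (‖T.D' p‖ + T.m / 2 * R) * ‖x - p‖ :=
    calc ‖T.D x - T.D p‖ = ‖T.D' p (x - p) + (T.D x - (T.D p + T.D' p (x - p)))‖ := by
          congr 1; abel
      _ ≤ ‖T.D' p‖ * ‖x - p‖ + T.m / 2 * ‖x - p‖ ^ 2 := norm_add_le_of_le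
          ((T.D' p).le_opNorm _) (norm_sub_linearization_le T.hasFDerivAt T.norm_D'_sub_le p x)
      _ = (‖T.D' p‖ + T.m / 2 * ‖x - p‖) * ‖x - p‖ := by ring
      _ ≤ (‖T.D' p‖ + T.m / 2 * R) * ‖x - p‖ := by gcongr
  calc ‖T.B x + T.C x + T.D x - (T.B p + T.C p + T.D p)‖
      = ‖(T.B x - T.B p) + (T.C x - T.C p) + (T.D x - T.D p)‖ := by congr 1; abel
    _ ≤ T.ℓ * ‖x - p‖ + T.β⁻¹ * ‖x - p‖ + (‖T.D' p‖ + T.m / 2 * R) * ‖x - p‖ :=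
      norm_add₃_le.trans (add_le_add_three (T.norm_B_sub_le x p)
        (norm_sub_le_of_cocoercive T.β_pos T.cocoercive x p) hD)
    _ = (T.ℓ + T.β⁻¹ + (‖T.D' p‖ + T.m / 2 * R)) * ‖x - p‖ := by ring

theorem isMaximalMonotone_sum [CompleteSpace E] : IsMaximalMonotone T.sum := by
  have hadd := T.isMaximalMonotone.add_of_isCalmOnBalls (fun x y => ?_) T.isCalmOnBalls
  · simp only [← sub_sub] at hadd
    exact hadd
  · have hC := (mul_nonneg T.β_pos.le (sq_nonneg _)).trans (T.cocoercive x y)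
    have := add_nonneg (add_nonneg (T.inner_B_nonneg x y) hC) (T.inner_D_nonneg x y)
    rwa [← inner_add_right, ← inner_add_right, ← add_sub_add_comm, ← add_sub_add_comm] at this

variable {T} {p w x y : E} {ρ : ℝ}

theorem inner_sub_le_of_mem_lagged (hy : y ∈ T.lagged p x) {a b : E} (hb : b ∈ T.sum a) :
    ⟪a - x, y - b⟫ ≤ 1 / (4 * T.β) * ‖x - p‖ ^ 2 := by
  have hA := T.isMaximalMonotone.inner_nonneg _ _ _ _ hb hy
  have hexpand : ⟪a - x, b - T.B a - T.C a - T.D a - (y - T.B x - T.C p - T.D x)⟫ =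
      -⟪a - x, y - b⟫ - ⟪a - x, T.B a - T.B x⟫ - ⟪a - x, T.C a - T.C p⟫ -
        ⟪a - x, T.D a - T.D x⟫ := by
    simp only [inner_sub_right]
    ring
  linarith [T.inner_B_nonneg a x, T.inner_D_nonneg a x,
    neg_inner_sub_le_of_cocoercive T.β_pos T.cocoercive a p x]

theorem isSeparatingStep_self (hw : w ∈ T.sum p) :
    IsSeparatingStep T.sum 0 p w p w (T.gap p w p w) where
  nonneg := by simp [gap]
  separates a b hb := by simpa [gap] using inner_sub_le_of_mem_lagged hw hb
  exists_residual_le := ⟨w, hw, by simp⟩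

theorem exists_mem_sum_norm_sub_le (hy : y ∈ T.lagged p x) (w : E) :
    ∃ y' ∈ T.sum x, ‖y' - w‖ ≤ ‖y - w‖ + T.β⁻¹ * ‖x - p‖ := by
  refine ⟨y + (T.C x - T.C p), ?_, ?_⟩
  · change y + (T.C x - T.C p) - T.B x - T.C x - T.D x ∈ T.A x
    rwa [show y + (T.C x - T.C p) - T.B x - T.C x - T.D x = y - T.B x - T.C p - T.D x by abel]
  · rw [add_sub_right_comm]
    exact norm_add_le_of_le le_rfl (norm_sub_le_of_cocoercive T.β_pos T.cocoercive x p)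

theorem isSeparatingStep_of_mem_lagged {c R M κ : ℝ} {e : E} (hmem : y ∈ T.lagged p x)
    (hy : y - w = ρ⁻¹ • (p - x) + e) (he : ‖e‖ ≤ κ * ‖x - p‖) (hρ : 0 < ρ)
    (hκ : ρ * (κ + 1 / (4 * T.β)) ≤ 1 - c) (hc0 : 0 < c) (hc1 : c ≤ 1) (hρR : ρ ≤ R)
    (hinv : ρ⁻¹ ≤ M * (1 + ρ⁻¹ * ‖x - p‖ ^ 2)) :
    IsSeparatingStep T.sum ((1 + 2 * T.β⁻¹ ^ 2) * (R / c) + 3 * (4 * M / c ^ 2)) p w x y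
      (T.gap p w x y) := by
  have hβ := T.β_pos
  have hcoercive := coercive_of_norm_error_le hρ hy he hκ
  have hnorm := norm_le_of_norm_error_le hρ hc0.le (by positivity) hy he hκ
  refine ⟨le_trans (by positivity) hcoercive, fun a b hb => ?_, ?_⟩
  · have := inner_sub_le_of_mem_lagged hmem hb
    rw [gap]
    linarith
  · have hx := sq_displacement_le hc0 hρ hρR hcoercive
    have hyw := sq_dual_residual_le hc0 hc1 hρ hinv hcoercive (norm_nonneg _) hnorm
    obtain ⟨y', hy', hle⟩ := exists_mem_sum_norm_sub_le hmem w
    have hy'w : ‖y' - w‖ ^ 2 ≤ 2 * (‖y - w‖ ^ 2 + (T.β⁻¹ * ‖x - p‖) ^ 2) :=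
      (pow_le_pow_left₀ (norm_nonneg _) hle 2).trans (add_sq_le)
    refine ⟨y', hy', ?_⟩
    calc ‖x - p‖ ^ 2 + ‖y - w‖ ^ 2 + ‖y' - w‖ ^ 2
        ≤ (1 + 2 * T.β⁻¹ ^ 2) * ‖x - p‖ ^ 2 + 3 * ‖y - w‖ ^ 2 := by linarith
      _ ≤ (1 + 2 * T.β⁻¹ ^ 2) * (R / c * (T.gap p w x y * (1 + T.gap p w x y))) +
          3 * (4 * M / c ^ 2 * (T.gap p w x y * (1 + T.gap p w x y))) := by
        gcongr
        · exact hx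
        · exact hyw
      _ = _ := by ring

variable (T) in
/-- A proximal-Newton step of size `ρ` from `(p, w)` to `(x, y)`: a backward step for `A` plus the
linearization of `D` at `p`, followed by explicit corrections. -/
def IsNewtonStep (θlo θhi δ : ℝ) (p w x y : E) (ρ : ℝ) : Prop :=
  (∃ a ∈ T.A x, p + ρ • w - ρ • (T.B p + T.C p) - x = ρ • (a + (T.D p + T.D' p (x - p)))) ∧
    y = ρ⁻¹ • (p - x) + w + (T.B x - T.B p) + (T.D x - (T.D p + T.D' p (x - p))) ∧
    θlo ≤ 4 * T.ℓ ^ 2 * ρ ^ 2 + (T.β⁻¹ + δ) * ρ + (T.m * ρ * ‖x - p‖) ^ 2 ∧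
    4 * T.ℓ ^ 2 * ρ ^ 2 + (T.β⁻¹ + δ) * ρ + (T.m * ρ * ‖x - p‖) ^ 2 ≤ θhi

variable (T) in
/-- A half-forward step of size `ρ` from `(p, w)` to `(x, y)`: a backward step for `A`, followed by
an explicit correction of `B`. -/
def IsHalfForwardStep (ρlo ρhi : ℝ) (p w x y : E) (ρ : ℝ) : Prop :=
  ρlo ≤ ρ ∧ ρ ≤ ρhi ∧ (∃ a ∈ T.A x, p + ρ • w - ρ • (T.B p + T.C p) - x = ρ • a) ∧
    y = ρ⁻¹ • (p - x) + w + (T.B x - T.B p)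

theorem eq_of_resolvent_equation (hρ : 0 < ρ) {a b : E} (h : p + ρ • w - ρ • b - x = ρ • a) :
    ρ⁻¹ • (p - x) + w = a + b := by
  rw [← inv_smul_smul₀ hρ.ne' (a + b), smul_add, ← h]
  match_scalars <;> field_simp
  ring

theorem IsNewtonStep.mem_lagged {θlo θhi δ : ℝ} (hρ : 0 < ρ)
    (h : T.IsNewtonStep θlo θhi δ p w x y ρ) : y ∈ T.lagged p x := by
  obtain ⟨⟨a, ha, heq⟩, rfl, -⟩ := h
  rw [eq_of_resolvent_equation hρ heq]
  change _ ∈ T.A x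
  convert ha using 1
  abel

theorem IsHalfForwardStep.mem_lagged {ρlo ρhi : ℝ} (hρ : 0 < ρ) (hD : T.D = 0)
    (h : T.IsHalfForwardStep ρlo ρhi p w x y ρ) : y ∈ T.lagged p x := by
  obtain ⟨-, -, ⟨a, ha, heq⟩, rfl⟩ := h
  rw [eq_of_resolvent_equation hρ heq]
  change _ ∈ T.A x
  convert ha using 1
  rw [hD, Pi.zero_apply]
  abel

section NewtonStepSize

variable {θlo θhi δ : ℝ}

theorem IsNewtonStep.stepSize_le (hδ : 0 < δ) (hθhi : θhi ≤ 2) (hρ : 0 < ρ)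
    (h : T.IsNewtonStep θlo θhi δ p w x y ρ) : ρ ≤ 2 / δ := by
  have hβ := T.β_pos
  obtain ⟨-, -, -, hhi⟩ := h
  rw [le_div_iff₀ hδ]
  have : 0 ≤ 4 * T.ℓ ^ 2 * ρ ^ 2 + T.β⁻¹ * ρ + (T.m * ρ * ‖x - p‖) ^ 2 := by positivity
  linarith

theorem IsNewtonStep.stepSize_mul_le (hδ : 0 ≤ δ) (hρ : 0 < ρ)
    (h : T.IsNewtonStep θlo θhi δ p w x y ρ) :
    ρ * (T.ℓ + T.m / 2 * ‖x - p‖ + 1 / (4 * T.β)) ≤ 1 - (1 / 2 - θhi / 4) := by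
  obtain ⟨-, -, -, hhi⟩ := h
  have hβ : 1 / (4 * T.β) = T.β⁻¹ / 4 := by rw [one_div, mul_inv]; ring
  have hℓ : T.ℓ * ρ ≤ (4 * T.ℓ ^ 2 * ρ ^ 2 + 1) / 4 := by
    linarith [sq_nonneg (2 * (T.ℓ * ρ) - 1)]
  have hm : T.m * ρ * ‖x - p‖ / 2 ≤ ((T.m * ρ * ‖x - p‖) ^ 2 + 1) / 4 := by
    linarith [sq_nonneg (T.m * ρ * ‖x - p‖ - 1)]
  rw [hβ]
  linarith [mul_nonneg hδ hρ.le]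

theorem IsNewtonStep.inv_stepSize_le {R : ℝ} (hθlo : 0 < θlo) (hδ : 0 ≤ δ) (hρ : 0 < ρ)
    (hρR : ρ ≤ R) (h : T.IsNewtonStep θlo θhi δ p w x y ρ) :
    ρ⁻¹ ≤ (4 * T.ℓ ^ 2 * R + (T.β⁻¹ + δ) + T.m ^ 2 * R ^ 2) / θlo *
      (1 + ρ⁻¹ * ‖x - p‖ ^ 2) := by
  have hβ := T.β_pos
  have hR := hρ.le.trans hρR
  obtain ⟨-, -, hlo, -⟩ := h
  rw [div_mul_eq_mul_div, le_div_iff₀' hθlo]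
  have hd : 0 ≤ ρ⁻¹ * ‖x - p‖ ^ 2 := by positivity
  calc θlo * ρ⁻¹
      ≤ (4 * T.ℓ ^ 2 * ρ ^ 2 + (T.β⁻¹ + δ) * ρ + (T.m * ρ * ‖x - p‖) ^ 2) * ρ⁻¹ := by gcongr
    _ = (4 * T.ℓ ^ 2 * ρ + (T.β⁻¹ + δ)) * 1 + T.m ^ 2 * ρ ^ 2 * (ρ⁻¹ * ‖x - p‖ ^ 2) := by
      field_simp
    _ ≤ (4 * T.ℓ ^ 2 * R + (T.β⁻¹ + δ)) * (1 + ρ⁻¹ * ‖x - p‖ ^ 2) +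
        T.m ^ 2 * R ^ 2 * (1 + ρ⁻¹ * ‖x - p‖ ^ 2) := by
      gcongr <;> linarith
    _ = _ := by ring

end NewtonStepSize

variable (T)

theorem exists_isSeparatingStep_of_isNewtonStep {θlo θhi δ : ℝ} (hθlo : 0 < θlo)
    (hθhi : θhi < 2) (hδ : 0 < δ) :
    ∃ K, ∀ p w x y ρ, 0 < ρ → T.IsNewtonStep θlo θhi δ p w x y ρ →
      IsSeparatingStep T.sum K p w x y (T.gap p w x y) := by
  refine ⟨_, fun p w x y ρ hρ h => isSeparatingStep_of_mem_lagged (h.mem_lagged hρ)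
    (e := T.B x - T.B p + (T.D x - (T.D p + T.D' p (x - p)))) ?_ ?_ hρ
    (h.stepSize_mul_le hδ.le hρ) (by linarith) ?_ (h.stepSize_le hδ hθhi.le hρ)
    (h.inv_stepSize_le hθlo hδ.le hρ (h.stepSize_le hδ hθhi.le hρ))⟩
  · rw [h.2.1]
    abel
  · calc ‖T.B x - T.B p + (T.D x - (T.D p + T.D' p (x - p)))‖
        ≤ T.ℓ * ‖x - p‖ + T.m / 2 * ‖x - p‖ ^ 2 := norm_add_le_of_le (T.norm_B_sub_le x p)
          (norm_sub_linearization_le T.hasFDerivAt T.norm_D'_sub_le p x)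
      _ = (T.ℓ + T.m / 2 * ‖x - p‖) * ‖x - p‖ := by ring
  · linarith [h.2.2.1.trans h.2.2.2]

theorem exists_isSeparatingStep_of_isHalfForwardStep {ρlo ρhi : ℝ} (hρlo : 0 < ρlo)
    (hρhi : ρhi < 1 / (1 / (4 * T.β) + T.ℓ)) (hD : T.D = 0) :
    ∃ K, ∀ p w x y ρ, T.IsHalfForwardStep ρlo ρhi p w x y ρ →
      IsSeparatingStep T.sum K p w x y (T.gap p w x y) := by
  have hβ := T.β_pos
  have hℓ := T.ℓ_nonneg
  have hκ : 0 < 1 / (4 * T.β) + T.ℓ := by positivity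
  rw [lt_div_iff₀ hκ] at hρhi
  refine ⟨_, fun p w x y ρ h =>
    have hρ : 0 < ρ := hρlo.trans_le h.1
    isSeparatingStep_of_mem_lagged (h.mem_lagged hρ hD) (e := T.B x - T.B p)
      (c := 1 - ρhi * (1 / (4 * T.β) + T.ℓ)) (M := ρlo⁻¹) ?_ (T.norm_B_sub_le x p) hρ ?_
      (by linarith) ?_ h.2.1 ?_⟩
  · rw [h.2.2.2]
    abel
  · rw [sub_sub_cancel, add_comm T.ℓ]
    exact mul_le_mul_of_nonneg_right h.2.1 hκ.le
  · exact sub_le_self 1 (mul_nonneg (hρ.le.trans h.2.1) hκ.le)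
  · calc ρ⁻¹ ≤ ρlo⁻¹ * 1 := by rw [mul_one]; exact inv_anti₀ hρlo h.1
      _ ≤ ρlo⁻¹ * (1 + ρ⁻¹ * ‖x - p‖ ^ 2) := by
        gcongr
        exact le_add_of_nonneg_right (by positivity)

theorem eventually_isSeparatingStep {P : Prop} {θlo θhi δ ρlo ρhi : ℝ} (hθlo : 0 < θlo)
    (hθhi : θhi < 2) (hδ : 0 < δ) (hρlo : ¬P → 0 < ρlo)
    (hρhi : ¬P → ρhi < 1 / (1 / (4 * T.β) + T.ℓ)) (hD : ¬P → T.D = 0) :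
    ∀ᶠ K in atTop, ∀ p w x y ρ, 0 < ρ →
      ((w ∈ T.sum p ∧ x = p ∧ y = w) ∨ (P ∧ T.IsNewtonStep θlo θhi δ p w x y ρ) ∨
        (¬P ∧ T.IsHalfForwardStep ρlo ρhi p w x y ρ)) →
      IsSeparatingStep T.sum K p w x y (T.gap p w x y) := by
  obtain ⟨K₁, hK₁⟩ := T.exists_isSeparatingStep_of_isNewtonStep hθlo hθhi hδ
  obtain ⟨K₂, hK₂⟩ : ∃ K, ∀ p w x y ρ, ¬P ∧ T.IsHalfForwardStep ρlo ρhi p w x y ρ →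
      IsSeparatingStep T.sum K p w x y (T.gap p w x y) := by
    by_cases hP : P
    · simp [hP]
    · simpa [hP] using T.exists_isSeparatingStep_of_isHalfForwardStep (hρlo hP) (hρhi hP) (hD hP)
  filter_upwards [eventually_ge_atTop 0, eventually_ge_atTop K₁, eventually_ge_atTop K₂] with
    K h₀ h₁ h₂ p w x y ρ hρ hstep
  rcases hstep with ⟨hw, rfl, rfl⟩ | ⟨-, hstep⟩ | hstep
  · exact (isSeparatingStep_self hw).mono h₀
  · exact (hK₁ p w x y ρ hρ hstep).mono h₁
  · exact (hK₂ p w x y ρ hstep).mono h₂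

end SplitOperator

theorem separator_eq_sum_add {H κ : Type*} [NormedAddCommGroup H] [InnerProductSpace ℝ H]
    [CompleteSpace H] [Fintype κ] {E : κ → Type*} [∀ i, NormedAddCommGroup (E i)]
    [∀ i, InnerProductSpace ℝ (E i)] [∀ i, CompleteSpace (E i)] (G : ∀ i, H →L[ℝ] E i)
    (z xn yn : H) (w x y : ∀ i, E i) (q : κ → ℝ) (qn : ℝ) :
    ⟪z, (∑ i, ContinuousLinearMap.adjoint (G i) (y i)) + yn⟫ + (∑ i, ⟪w i, x i - G i xn⟫) -
        ((∑ i, (⟪x i, y i⟫ + q i)) + (⟪xn, yn⟫ + qn)) =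
      (∑ i, (⟪G i z - x i, y i - w i⟫ - q i)) +
        (⟪z - xn, yn - -∑ i, ContinuousLinearMap.adjoint (G i) (w i)⟫ - qn) := by
  simp only [sub_neg_eq_add, inner_add_right, inner_sub_left, inner_sub_right, inner_sum, map_sub,
    ContinuousLinearMap.adjoint_inner_right, Finset.sum_add_distrib, Finset.sum_sub_distrib,
    fun i => real_inner_comm (w i) (x i), fun i => real_inner_comm (w i) (G i xn)]
  ring

/-- weak convergence of the projective splitting algorithm with backward,
half-forward and proximal-Newton steps.

Indices `i = 1, …, n−1` are modeled by `i : Fin m` (with Hilbert spaces `E i` and bounded linear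
maps `G i : H₀ → E i`), while the last index `n` (for which `G_n = id` and the space is `H₀`) is
treated separately via the operators `An, Bn, Cn, Dn` and the sequences `xn, yn, ρn`.  Each block
`T_i = A_i + B_i + C_i + D_i` consists of a maximal monotone `A_i`, a monotone `ℓ_i`-Lipschitz
`B_i`, a `β_i`-cocoercive `C_i`, and a monotone differentiable `D_i` with `m_i`-Lipschitz
derivative.  The index set `I_D` is modeled by `ID : Set (Fin m)` together with `IDn : Prop`
(whether `n ∈ I_D`).  The iterates satisfy, for each `k` and each block, one of the three
branches (I), (II) (proximal-Newton, `i ∈ I_D`), (III) (`i ∉ I_D`), followed by the relaxed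
projection onto the separating half-space.  The conclusion is weak convergence of
`(zᵏ, w₁ᵏ, …, w_{n−1}ᵏ)` to a point of the extended-solution set `S`, together with the weak
convergence of the auxiliary sequences `x_iᵏ ⇀ G_i z̄` and `y_iᵏ ⇀ w̄_i`. -/
theorem projective_splitting_weak_convergence
    {H0 : Type*} [NormedAddCommGroup H0] [InnerProductSpace ℝ H0] [CompleteSpace H0]
    {m : ℕ} {E : Fin m → Type*} [∀ i, NormedAddCommGroup (E i)]
    [∀ i, InnerProductSpace ℝ (E i)] [∀ i, CompleteSpace (E i)]
    (G : ∀ i, H0 →L[ℝ] E i)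
    -- the operators A_i, B_i, C_i, D_i on E i, for i = 1, …, n−1
    (A : ∀ i, E i → Set (E i))
    (hAmono : ∀ i, ∀ x y u v, u ∈ A i x → v ∈ A i y → 0 ≤ ⟪x - y, u - v⟫)
    (hAmax : ∀ i, ∀ p q, (∀ r s, s ∈ A i r → 0 ≤ ⟪p - r, q - s⟫) → q ∈ A i p)
    (B : ∀ i, E i → E i) (ℓ : Fin m → ℝ) (hℓ : ∀ i, 0 ≤ ℓ i)
    (hBmono : ∀ i, ∀ x y, 0 ≤ ⟪x - y, B i x - B i y⟫)
    (hBlip : ∀ i, ∀ x y, ‖B i x - B i y‖ ≤ ℓ i * ‖x - y‖)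
    (C : ∀ i, E i → E i) (β : Fin m → ℝ) (hβ : ∀ i, 0 < β i)
    (hC : ∀ i, ∀ x y, β i * ‖C i x - C i y‖ ^ 2 ≤ ⟪x - y, C i x - C i y⟫)
    (D : ∀ i, E i → E i) (D' : ∀ i, E i → E i →L[ℝ] E i)
    (hD : ∀ i, ∀ x, HasFDerivAt (D i) (D' i x) x)
    (hDmono : ∀ i, ∀ x y, 0 ≤ ⟪x - y, D i x - D i y⟫)
    (mc : Fin m → ℝ) (hmc : ∀ i, 0 ≤ mc i)
    (hDlip : ∀ i, ∀ x y, ‖D' i x - D' i y‖ ≤ mc i * ‖x - y‖)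
    -- the operators for the last index n, acting on H0 (G_n = id)
    (An : H0 → Set H0)
    (hAnmono : ∀ x y u v, u ∈ An x → v ∈ An y → 0 ≤ ⟪x - y, u - v⟫)
    (hAnmax : ∀ p q, (∀ r s, s ∈ An r → 0 ≤ ⟪p - r, q - s⟫) → q ∈ An p)
    (Bn : H0 → H0) (ℓn : ℝ) (hℓn : 0 ≤ ℓn)
    (hBnmono : ∀ x y, 0 ≤ ⟪x - y, Bn x - Bn y⟫)
    (hBnlip : ∀ x y, ‖Bn x - Bn y‖ ≤ ℓn * ‖x - y‖)
    (Cn : H0 → H0) (βn : ℝ) (hβn : 0 < βn)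
    (hCn : ∀ x y, βn * ‖Cn x - Cn y‖ ^ 2 ≤ ⟪x - y, Cn x - Cn y⟫)
    (Dn : H0 → H0) (Dn' : H0 → H0 →L[ℝ] H0) (hDn : ∀ x, HasFDerivAt Dn (Dn' x) x)
    (hDnmono : ∀ x y, 0 ≤ ⟪x - y, Dn x - Dn y⟫)
    (mcn : ℝ) (hmcn : 0 ≤ mcn) (hDnlip : ∀ x y, ‖Dn' x - Dn' y‖ ≤ mcn * ‖x - y‖)
    -- the index set I_D
    (ID : Set (Fin m)) (IDn : Prop)
    (hID : ∀ i ∈ ID, 0 < mc i) (hIDc : ∀ i ∉ ID, D i = 0)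
    (hIDn : IDn → 0 < mcn) (hIDnc : ¬IDn → Dn = 0)
    -- the extended-solution set S is nonempty
    (hS : ∃ (zs : H0) (ws : ∀ i, E i),
      (∀ i, ws i - B i (G i zs) - C i (G i zs) - D i (G i zs) ∈ A i (G i zs)) ∧
      (-(∑ i, ContinuousLinearMap.adjoint (G i) (ws i))) - Bn zs - Cn zs - Dn zs ∈ An zs)
    -- parameters
    (τlo τhi θlo θhi ρhat δhat γ : ℝ)
    (hτ0 : 0 < τlo) (hτ1 : τlo < τhi) (hτ2 : τhi < 2)
    (hθ0 : 0 < θlo) (hθ1 : θlo < θhi) (hθ2 : θhi < 2)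
    (hρhat : 0 < ρhat) (hδ : 0 < δhat) (hγ : 0 < γ)
    (ρlo ρhi : Fin m → ℝ) (ρlon ρhin : ℝ)
    (hρbnds : ∀ i ∉ ID, 0 < ρlo i ∧ ρlo i ≤ ρhi i ∧ ρhi i < 1 / (1 / (4 * β i) + ℓ i))
    (hρbndsn : ¬IDn → 0 < ρlon ∧ ρlon ≤ ρhin ∧ ρhin < 1 / (1 / (4 * βn) + ℓn))
    -- the sequences generated by the algorithm
    (z : ℕ → H0) (w : ℕ → ∀ i, E i)
    (x : ℕ → ∀ i, E i) (y : ℕ → ∀ i, E i) (ρ : ℕ → Fin m → ℝ)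
    (xn yn : ℕ → H0) (ρn : ℕ → ℝ)
    (hρpos : ∀ k i, 0 < ρ k i) (hρnpos : ∀ k, 0 < ρn k)
    -- for every k and every i < n, one of the branches (I), (II), (III) holds
    (hbranch : ∀ k i,
      -- (I)
      (w k i - B i (G i (z k)) - C i (G i (z k)) - D i (G i (z k)) ∈ A i (G i (z k)) ∧
        ρ k i = ρhat ∧ x k i = G i (z k) ∧ y k i = w k i) ∨
      -- (II) proximal-Newton step (i ∈ I_D)
      (i ∈ ID ∧
        (∃ a ∈ A i (x k i),
          G i (z k) + ρ k i • w k i - ρ k i • (B i (G i (z k)) + C i (G i (z k))) - x k i =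
            ρ k i • (a + (D i (G i (z k)) + D' i (G i (z k)) (x k i - G i (z k))))) ∧
        y k i = (ρ k i)⁻¹ • (G i (z k) - x k i) + w k i + (B i (x k i) - B i (G i (z k))) +
          (D i (x k i) - (D i (G i (z k)) + D' i (G i (z k)) (x k i - G i (z k)))) ∧
        θlo ≤ 4 * ℓ i ^ 2 * ρ k i ^ 2 + ((β i)⁻¹ + δhat) * ρ k i +
            (mc i * ρ k i * ‖x k i - G i (z k)‖) ^ 2 ∧
        4 * ℓ i ^ 2 * ρ k i ^ 2 + ((β i)⁻¹ + δhat) * ρ k i +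
            (mc i * ρ k i * ‖x k i - G i (z k)‖) ^ 2 ≤ θhi) ∨
      -- (III) backward step with Tseng correction (i ∉ I_D)
      (i ∉ ID ∧ ρlo i ≤ ρ k i ∧ ρ k i ≤ ρhi i ∧
        (∃ a ∈ A i (x k i),
          G i (z k) + ρ k i • w k i - ρ k i • (B i (G i (z k)) + C i (G i (z k))) - x k i =
            ρ k i • a) ∧
        y k i = (ρ k i)⁻¹ • (G i (z k) - x k i) + w k i + (B i (x k i) - B i (G i (z k)))))
    -- the same trichotomy at the last index n (G_n = id, w_nᵏ = −Σ_i G_i* w_iᵏ)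
    (hbranchn : ∀ k,
      ((-(∑ i, ContinuousLinearMap.adjoint (G i) (w k i))) - Bn (z k) - Cn (z k) - Dn (z k) ∈
          An (z k) ∧
        ρn k = ρhat ∧ xn k = z k ∧
        yn k = -(∑ i, ContinuousLinearMap.adjoint (G i) (w k i))) ∨
      (IDn ∧
        (∃ a ∈ An (xn k),
          z k + ρn k • (-(∑ i, ContinuousLinearMap.adjoint (G i) (w k i))) -
              ρn k • (Bn (z k) + Cn (z k)) - xn k =
            ρn k • (a + (Dn (z k) + Dn' (z k) (xn k - z k)))) ∧
        yn k = (ρn k)⁻¹ • (z k - xn k) +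
          (-(∑ i, ContinuousLinearMap.adjoint (G i) (w k i))) + (Bn (xn k) - Bn (z k)) +
          (Dn (xn k) - (Dn (z k) + Dn' (z k) (xn k - z k))) ∧
        θlo ≤ 4 * ℓn ^ 2 * ρn k ^ 2 + (βn⁻¹ + δhat) * ρn k +
            (mcn * ρn k * ‖xn k - z k‖) ^ 2 ∧
        4 * ℓn ^ 2 * ρn k ^ 2 + (βn⁻¹ + δhat) * ρn k +
            (mcn * ρn k * ‖xn k - z k‖) ^ 2 ≤ θhi) ∨
      (¬IDn ∧ ρlon ≤ ρn k ∧ ρn k ≤ ρhin ∧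
        (∃ a ∈ An (xn k),
          z k + ρn k • (-(∑ i, ContinuousLinearMap.adjoint (G i) (w k i))) -
              ρn k • (Bn (z k) + Cn (z k)) - xn k = ρn k • a) ∧
        yn k = (ρn k)⁻¹ • (z k - xn k) +
          (-(∑ i, ContinuousLinearMap.adjoint (G i) (w k i))) + (Bn (xn k) - Bn (z k))))
    -- the auxiliary quantities uᵏ, vᵏ, φₖ, πₖ
    (u : ℕ → ∀ i, E i) (hu : ∀ k i, u k i = x k i - G i (xn k))
    (v : ℕ → H0)
    (hv : ∀ k, v k = (∑ i, ContinuousLinearMap.adjoint (G i) (y k i)) + yn k)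
    (φ : ℕ → ℝ)
    (hφ : ∀ k, φ k = ⟪z k, v k⟫ + (∑ i, ⟪w k i, u k i⟫) -
      ((∑ i, (⟪x k i, y k i⟫ + 1 / (4 * β i) * ‖x k i - G i (z k)‖ ^ 2)) +
        (⟪xn k, yn k⟫ + 1 / (4 * βn) * ‖xn k - z k‖ ^ 2)))
    (π : ℕ → ℝ)
    (hπ : ∀ k, π k = γ⁻¹ * ‖v k‖ ^ 2 + ∑ i, ‖u k i‖ ^ 2)
    -- the projection/update step
    (hupdate : ∀ k,
      (0 < φ k → ∃ τ ∈ Set.Icc τlo τhi,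
        z (k + 1) = z k - (γ⁻¹ * (τ * φ k / π k)) • v k ∧
        ∀ i, w (k + 1) i = w k i - (τ * φ k / π k) • u k i) ∧
      (φ k ≤ 0 → z (k + 1) = z k ∧ ∀ i, w (k + 1) i = w k i)) :
    -- conclusion: weak convergence to a point of the extended-solution set
    ∃ (zbar : H0) (wbar : ∀ i, E i),
      (∀ h : H0, Tendsto (fun k => ⟪h, z k⟫) atTop (nhds ⟪h, zbar⟫)) ∧
      (∀ i, ∀ h : E i, Tendsto (fun k => ⟪h, w k i⟫) atTop (nhds ⟪h, wbar i⟫)) ∧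
      (∀ h : H0,
        Tendsto (fun k => ⟪h, -(∑ i, ContinuousLinearMap.adjoint (G i) (w k i))⟫) atTop
          (nhds ⟪h, -(∑ i, ContinuousLinearMap.adjoint (G i) (wbar i))⟫)) ∧
      (∀ i, wbar i - B i (G i zbar) - C i (G i zbar) - D i (G i zbar) ∈ A i (G i zbar)) ∧
      ((-(∑ i, ContinuousLinearMap.adjoint (G i) (wbar i))) - Bn zbar - Cn zbar - Dn zbar ∈
        An zbar) ∧
      (∀ i, ∀ h : E i, Tendsto (fun k => ⟪h, x k i⟫) atTop (nhds ⟪h, G i zbar⟫)) ∧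
      (∀ h : H0, Tendsto (fun k => ⟪h, xn k⟫) atTop (nhds ⟪h, zbar⟫)) ∧
      (∀ i, ∀ h : E i, Tendsto (fun k => ⟪h, y k i⟫) atTop (nhds ⟪h, wbar i⟫)) ∧
      (∀ h : H0,
        Tendsto (fun k => ⟪h, yn k⟫) atTop
          (nhds ⟪h, -(∑ i, ContinuousLinearMap.adjoint (G i) (wbar i))⟫)) := by
  let T (i : Fin m) : SplitOperator (E i) :=
    ⟨A i, ⟨hAmono i, hAmax i⟩, B i, ℓ i, hℓ i, hBmono i, hBlip i, C i, β i, hβ i, hC i, D i, D' i,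
      hD i, hDmono i, mc i, hmc i, hDlip i⟩
  let Tn : SplitOperator H0 :=
    ⟨An, ⟨hAnmono, hAnmax⟩, Bn, ℓn, hℓn, hBnmono, hBnlip, Cn, βn, hβn, hCn, Dn, Dn', hDn, hDnmono,
      mcn, hmcn, hDnlip⟩
  have hK := eventually_all.2 fun i => (T i).eventually_isSeparatingStep (P := i ∈ ID) hθ0 hθ2 hδ
    (fun h => (hρbnds i h).1) (fun h => (hρbnds i h).2.2) (hIDc i)
  have hKn := Tn.eventually_isSeparatingStep (P := IDn) hθ0 hθ2 hδ (fun h => (hρbndsn h).1)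
    (fun h => (hρbndsn h).2.2) hIDnc
  obtain ⟨K, ⟨hK, hKn⟩, hK0⟩ := ((hK.and hKn).and (eventually_ge_atTop 0)).exists
  refine exists_weakTendsto_of_isSeparatingStep (fun i => (T i).isMaximalMonotone_sum)
    Tn.isMaximalMonotone_sum hS hK0 hτ0 hτ1.le hτ2 hγ
    (fun k i => hK i _ _ _ _ _ (hρpos k i) ((hbranch k i).imp_left fun ⟨hw, _, h⟩ => ⟨hw, h⟩))
    (fun k => hKn _ _ _ _ _ (hρnpos k) ((hbranchn k).imp_left fun ⟨hw, _, h⟩ => ⟨hw, h⟩))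
    hu hv (fun k => ?_) hπ hupdate
  simp only [hφ, hv, hu, separator_eq_sum_add]
  rfl
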